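/- arXiv:2602.19434 — 2 statements merged into one kernel-verified Lean document; each statement's English description precedes it below -/
import Mathlib

section
/- There exists a universal constant C < ∞ (independent of n and d) such that for all integers n ≥ 1 and d ≥ 3: every map F : TC([2^n]^d) → L_1 with bi-Lipschitz distortion at most D satisfies D ≥ C^{−1}·(n−23)·d. -/
open MeasureTheory Finset

noncomputable section

/-- Points of the grid `[2^n]^d` (coordinates taken 0-based). -/
abbrev GridPt (n d : ℕ) := Fin d → Fin (2^n)

/-- Normalized counting "volume" of a subset of the grid: `Vol(A) = 2^{-nd}|A|`. -/
def Vol (n d : ℕ) (A : Finset (GridPt n d)) : ℝ := (A.card : ℝ) / 2^(n*d)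

/-- The ℓ1 metric on the grid. -/
def gdist {n d : ℕ} (u v : GridPt n d) : ℝ := ∑ i, |((u i : ℕ) : ℝ) - ((v i : ℕ) : ℝ)|

/-- The transportation cost norm of a signed measure `μ` on the grid (given by its point
masses), via Kantorovich duality: the supremum of `|∫ f dμ|` over `1`-Lipschitz `f`. -/
def tcNorm (n d : ℕ) (μ : GridPt n d → ℝ) : ℝ :=
  sSup {r : ℝ | ∃ f : GridPt n d → ℝ,
    (∀ u v, |f u - f v| ≤ gdist u v) ∧ r = |∑ x, f x * μ x|}

/-- The Lebesgue space `L_1(0,1)`. -/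
abbrev L1Space : Type := Lp ℝ 1 (volume.restrict (Set.Ioo (0:ℝ) 1))

/-- One step to the right inside `Fin m` (staying put at the end). -/
def stp {m : ℕ} (t : Fin m) : Fin m := if h : t.1 + 1 < m then ⟨t.1 + 1, h⟩ else t

/-- Total variation over the edges of the grid. -/
def edgeSum (m d : ℕ) (f : (Fin d → Fin m) → ℝ) : ℝ :=
  ∑ x : Fin d → Fin m, ∑ i : Fin d, |f (Function.update x i (stp (x i))) - f x|

lemma tv_one_dim {m : ℕ} (g : Fin m → ℝ) (a b : Fin m) :
    g a - g b ≤ ∑ t, |g (stp t) - g t| := by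
  obtain _ | m := m
  · exact a.elim0
  set G : ℕ → ℝ := fun i => g ⟨min i m, by omega⟩ with hG
  have h1 : ∀ t : Fin (m+1), |g (stp t) - g t| = dist (G t.1) (G (t.1+1)) := by
    intro t
    rw [dist_comm, Real.dist_eq]
    congr 1
    have e1 : g t = G t.1 := by
      simp only [hG]; congr 1; ext; simp; omega
    have e2 : g (stp t) = G (t.1+1) := by
      simp only [hG, stp]; congr 1; ext; split_ifs with h <;> simp <;> omega
    rw [e1, e2]
  have h2 : ∑ t : Fin (m+1), |g (stp t) - g t| = ∑ i ∈ Finset.range (m+1), dist (G i) (G (i+1)) := by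
    rw [← Fin.sum_univ_eq_sum_range (fun i => dist (G i) (G (i+1)))]
    exact Finset.sum_congr rfl (fun t _ => h1 t)
  have e : ∀ t : Fin (m+1), g t = G t.1 := by
    intro t; simp only [hG]; congr 1; ext; simp; omega
  have key : ∀ i j : ℕ, i ≤ j → j ≤ m → dist (G i) (G j) ≤ ∑ i ∈ Finset.range (m+1), dist (G i) (G (i+1)) := by
    intro i j hij hj
    refine (dist_le_Ico_sum_dist G hij).trans ?_
    refine Finset.sum_le_sum_of_subset_of_nonneg ?_ (fun _ _ _ => dist_nonneg)
    intro x hx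
    simp at hx ⊢; omega
  rw [h2, e a, e b]
  refine (le_abs_self _).trans ?_
  rw [← Real.dist_eq]
  rcases le_total a.1 b.1 with h | h
  · exact key _ _ h (by omega)
  · rw [dist_comm]; exact key _ _ h (by omega)

lemma sum_cons {m d : ℕ} (f : (Fin (d+1) → Fin m) → ℝ) :
    ∑ x, f x = ∑ t : Fin m, ∑ y : Fin d → Fin m, f (Fin.cons t y) := by
  rw [← (Fin.consEquiv (fun _ : Fin (d+1) => Fin m)).sum_comp, Fintype.sum_prod_type]
  rfl

lemma edgeSum_succ {m d : ℕ} (f : (Fin (d+1) → Fin m) → ℝ) :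
    edgeSum m (d+1) f = (∑ t : Fin m, ∑ y : Fin d → Fin m, |f (Fin.cons (stp t) y) - f (Fin.cons t y)|)
      + ∑ t : Fin m, edgeSum m d (fun y => f (Fin.cons t y)) := by
  unfold edgeSum
  rw [sum_cons, ← Finset.sum_add_distrib]
  refine Finset.sum_congr rfl fun t _ => ?_
  rw [← Finset.sum_add_distrib]
  refine Finset.sum_congr rfl fun y _ => ?_
  rw [Fin.sum_univ_succ]
  congr 1
  · simp
  · refine Finset.sum_congr rfl fun i _ => ?_
    rw [Fin.cons_succ, ← Fin.cons_update]

/-- Logarithmic edge-isoperimetric inequality on the grid. -/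
lemma iso_log {m : ℕ} (hm : 0 < m) (s : ℝ) (d : ℕ) (f : (Fin d → Fin m) → ℝ) (hf : ∀ x, f x = 0 ∨ f x = 1) :
    (∑ x, f x) * (Real.exp (-s) * (d * (1 + s) - Real.log (∑ x, f x)) - d / m) ≤ edgeSum m d f := by
  induction d with
  | zero =>
    have : edgeSum m 0 f = 0 := by simp [edgeSum]
    rw [this]
    rcases hf default with h | h <;> simp [h]
  | succ d ih =>
    have hm' : (0:ℝ) < m := by exact_mod_cast hm
    rw [edgeSum_succ, sum_cons]
    set S : Fin m → ℝ := fun t => ∑ y : Fin d → Fin m, f (Fin.cons t y) with hS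
    have hS0 : ∀ t, 0 ≤ S t := fun t => Finset.sum_nonneg fun y _ => by
      rcases hf (Fin.cons t y) with h | h <;> simp [h]
    have : Nonempty (Fin m) := ⟨⟨0, hm⟩⟩
    obtain ⟨t0, ht0⟩ := Finite.exists_max S
    have h1 : S t0 - (∑ t, S t) / m ≤ ∑ t : Fin m, ∑ y : Fin d → Fin m, |f (Fin.cons (stp t) y) - f (Fin.cons t y)| := by
      have h2 : ∑ t, |S (stp t) - S t| ≤ ∑ t : Fin m, ∑ y : Fin d → Fin m, |f (Fin.cons (stp t) y) - f (Fin.cons t y)| := by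
        refine Finset.sum_le_sum fun t _ => ?_
        simp only [hS]
        rw [← Finset.sum_sub_distrib]
        exact Finset.abs_sum_le_sum_abs _ _
      refine le_trans ?_ h2
      have h3 : ∑ b : Fin m, (S t0 - S b) ≤ ∑ b : Fin m, ∑ t, |S (stp t) - S t| :=
        Finset.sum_le_sum fun b _ => tv_one_dim S t0 b
      rw [Finset.sum_sub_distrib] at h3
      simp only [Finset.sum_const, Finset.card_univ, Fintype.card_fin, nsmul_eq_mul] at h3
      have : S t0 - (∑ t, S t) / m = (m * S t0 - ∑ t, S t)/m := by field_simp
      rw [this, div_le_iff₀ hm']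
      linarith
    have h4 : ∑ t, (S t) * (Real.exp (-s) * (d * (1 + s) - Real.log (S t)) - d / m) ≤ ∑ t : Fin m, edgeSum m d (fun y => f (Fin.cons t y)) :=
      Finset.sum_le_sum fun t _ => ih (fun y => f (Fin.cons t y)) (fun y => hf _)
    refine le_trans ?_ (add_le_add h1 h4)
    have h5 : ∑ t, S t * Real.log (S t) ≤ (∑ t, S t) * Real.log (S t0) := by
      rw [Finset.sum_mul]
      refine Finset.sum_le_sum fun t _ => ?_
      rcases (hS0 t).eq_or_lt with h | h
      · rw [← h]; simp
      · exact mul_le_mul_of_nonneg_left (Real.log_le_log h (ht0 t)) h.le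
    have h6 : ∑ t, (S t) * (Real.exp (-s) * (d * (1 + s) - Real.log (S t)) - d / m)
        = (∑ t, S t) * (Real.exp (-s) * (d * (1+s)) - d / m) - Real.exp (-s) * ∑ t, S t * Real.log (S t) := by
      rw [Finset.sum_mul, Finset.mul_sum, ← Finset.sum_sub_distrib]
      refine Finset.sum_congr rfl fun t _ => by ring
    rw [h6]
    set T := ∑ t, S t with hT
    have hT0 : 0 ≤ T := Finset.sum_nonneg fun t _ => hS0 t
    have he := Real.exp_pos (-s)
    have h7 : T * (Real.exp (-s) * (1 + s)) + Real.exp (-s) * (T * Real.log (S t0)) - Real.exp (-s) * (T * Real.log T) ≤ S t0 := by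
      rcases hT0.eq_or_lt with h | h
      · rw [← h]; simpa using hS0 t0
      · have hp : 0 < S t0 := by
          by_contra hcon
          have : T ≤ 0 := Finset.sum_nonpos fun t _ => (ht0 t).trans (not_lt.1 hcon)
          linarith
        have h8 := Real.add_one_le_exp (s + Real.log (S t0 / T))
        rw [Real.exp_add, Real.exp_log (by positivity), Real.log_div hp.ne' h.ne'] at h8
        have h9 : Real.exp (-s) * T * (s + (Real.log (S t0) - Real.log T) + 1) ≤ Real.exp (-s) * T * (Real.exp s * (S t0 / T)) :=
          mul_le_mul_of_nonneg_left h8 (by positivity)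
        have h10 : Real.exp (-s) * T * (Real.exp s * (S t0 / T)) = S t0 := by
          rw [Real.exp_neg]; field_simp
        rw [h10] at h9
        linarith
    have h11 := mul_le_mul_of_nonneg_left h5 he.le
    push_cast
    have : T * (Real.exp (-s) * ((d + 1) * (1 + s) - Real.log T) - (d + 1) / m) =
      T * (Real.exp (-s) * (1 + s)) - Real.exp (-s) * (T * Real.log T) - T / m + T * (Real.exp (-s) * (d * (1+s)) - d / m) := by
      ring
    rw [this]
    linarith

/-- Isoperimetric inequality: if the density of the set is `β ^ d` then ... -/
lemma iso {m : ℕ} (hm : 0 < m) (d : ℕ) (f : (Fin d → Fin m) → ℝ) (hf : ∀ x, f x = 0 ∨ f x = 1)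
    (β : ℝ) (hβ : 0 < β) (hS : ∑ x, f x = (m * β) ^ d) (hd : 1 ≤ d) :
    d * (m:ℝ) ^ d / m * (β ^ (d-1) * (1 - β)) ≤ edgeSum m d f := by
  have hm' : (0:ℝ) < m := by exact_mod_cast hm
  have h := iso_log hm (Real.log (m * β)) d f hf
  have h2 : 0 < (m:ℝ) * β := by positivity
  rw [hS, Real.log_pow, Real.exp_neg, Real.exp_log h2] at h
  refine le_trans (le_of_eq ?_) h
  obtain ⟨e, rfl⟩ : ∃ e, d = e + 1 := ⟨d - 1, by omega⟩
  simp only [Nat.add_sub_cancel]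
  field_simp
  ring

/-- Passing from sets to functions (coarea). -/
lemma coarea {X ι κ : Type*} [Fintype X] [Nonempty X] [Fintype ι] [Fintype κ] (a : ι → ℝ) (ha : ∀ i, 0 ≤ a i)
    (μ : ι → X → ℝ) (hμ : ∀ i, ∑ x, μ i x = 0) (b : κ → ℝ) (u v : κ → X)
    (h : ∀ g : X → ℝ, (∀ x, g x = 0 ∨ g x = 1) →
      ∑ i, a i * |∑ x, g x * μ i x| ≤ ∑ j, b j * |g (u j) - g (v j)|) (f : X → ℝ) :
    ∑ i, a i * |∑ x, f x * μ i x| ≤ ∑ j, b j * |f (u j) - f (v j)| := by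
  obtain ⟨x0, hx0⟩ := Finite.exists_min f
  obtain ⟨x1, hx1⟩ := Finite.exists_max f
  set m := f x0
  set M := f x1
  let g : ℝ → X → ℝ := fun t x => if t < f x then 1 else 0
  have hg : ∀ x, (fun t => g t x) = Set.indicator (Set.Iio (f x)) 1 := by
    intro x; ext t; simp [g, Set.indicator]
  have hmM : m ≤ M := hx0 x1
  have hgi : ∀ x, IntegrableOn (fun t => g t x) (Set.Ico m M) := by
    intro x
    rw [hg]
    exact (integrableOn_const (by simp) (by simp)).indicator measurableSet_Iio
  have hgv : ∀ x, ∫ t in Set.Ico m M, g t x = f x - m := by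
    intro x
    rw [hg, integral_indicator_one measurableSet_Iio, measureReal_restrict_apply measurableSet_Iio]
    have : Set.Iio (f x) ∩ Set.Ico m M = Set.Ico m (f x) := by
      ext t; simp only [Set.mem_inter_iff, Set.mem_Iio, Set.mem_Ico]
      have := hx1 x
      constructor
      · rintro ⟨h1, h2, h3⟩; exact ⟨h2, h1⟩
      · rintro ⟨h1, h2⟩; exact ⟨h2, h1, h2.trans_le this⟩
    rw [this, Real.volume_real_Ico_of_le (hx0 x)]
  have hab : ∀ x y, ∫ t in Set.Ico m M, |g t x - g t y| = |f x - f y| := by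
    have key : ∀ x y, f y ≤ f x → ∫ t in Set.Ico m M, |g t x - g t y| = |f x - f y| := by
      intro x y hxy
      have : ∀ t, |g t x - g t y| = g t x - g t y := by
        intro t
        refine abs_of_nonneg ?_
        simp only [g]
        split_ifs <;> linarith
      simp only [this]
      rw [integral_sub (hgi x) (hgi y), hgv, hgv, abs_of_nonneg (by linarith)]; ring
    intro x y
    rcases le_total (f y) (f x) with hh | hh
    · exact key x y hh
    · rw [abs_sub_comm, ← key y x hh]; simp only [abs_sub_comm]
  have hsum : ∀ i, ∑ x, f x * μ i x = ∫ t in Set.Ico m M, ∑ x, g t x * μ i x := by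
    intro i
    rw [integral_finsetSum _ (fun x _ => (hgi x).mul_const _)]
    simp only [integral_mul_const, hgv, sub_mul, Finset.sum_sub_distrib]
    rw [← Finset.mul_sum, hμ]; simp
  have hI1 : ∀ i, IntegrableOn (fun t => ∑ x, g t x * μ i x) (Set.Ico m M) := fun i =>
    integrable_finsetSum _ (fun x _ => (hgi x).mul_const _)
  have hI2 : ∀ j, IntegrableOn (fun t => b j * |g t (u j) - g t (v j)|) (Set.Ico m M) := fun j =>
    ((hgi _).sub (hgi _)).abs.const_mul _
  calc ∑ i, a i * |∑ x, f x * μ i x| ≤ ∑ i, a i * ∫ t in Set.Ico m M, |∑ x, g t x * μ i x| := by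
        refine Finset.sum_le_sum fun i _ => mul_le_mul_of_nonneg_left ?_ (ha i)
        rw [hsum]; exact abs_integral_le_integral_abs
    _ = ∫ t in Set.Ico m M, ∑ i, a i * |∑ x, g t x * μ i x| := by
        rw [integral_finsetSum _ (fun i _ => (hI1 i).abs.const_mul _)]
        simp only [integral_const_mul]
    _ ≤ ∫ t in Set.Ico m M, ∑ j, b j * |g t (u j) - g t (v j)| := by
        refine integral_mono (integrable_finsetSum _ (fun i _ => (hI1 i).abs.const_mul _))
          (integrable_finsetSum _ (fun j _ => hI2 j)) fun t => h (g t) ?_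
        intro x; simp only [g]; split_ifs <;> simp
    _ = _ := by
        rw [integral_finsetSum _ (fun j _ => hI2 j)]
        simp only [integral_const_mul]
        exact Finset.sum_congr rfl fun j _ => by rw [hab]

lemma sum_fin_arrow_succ {X : Type*} [Fintype X] (M : ℕ) (F : (Fin (M+1) → X) → ℝ) :
    ∑ ω, F ω = ∑ z : X, ∑ ω : Fin M → X, F (Fin.cons z ω) := by
  rw [← (Fin.consEquiv (fun _ : Fin (M+1) => X)).sum_comp, Fintype.sum_prod_type]
  rfl

lemma first_moment {X : Type*} [Fintype X] (h : X → ℝ) (M : ℕ) :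
    (Fintype.card X) * ∑ ω : Fin M → X, ∑ j, h (ω j) = M * (Fintype.card X : ℝ) ^ M * ∑ z, h z := by
  induction M with
  | zero => simp
  | succ M ih =>
    rw [sum_fin_arrow_succ]
    simp only [Fin.sum_univ_succ, Fin.cons_zero, Fin.cons_succ, Finset.sum_add_distrib,
      Finset.sum_const, Finset.card_univ, nsmul_eq_mul, Fintype.card_fun, Fintype.card_fin]
    rw [← Finset.mul_sum]
    push_cast
    rw [mul_add, ih, pow_succ]; ring

lemma second_moment {X : Type*} [Fintype X] (h : X → ℝ) (h0 : ∑ z, h z = 0) (M : ℕ) :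
    (Fintype.card X) * ∑ ω : Fin M → X, (∑ j, h (ω j)) ^ 2 = M * (Fintype.card X : ℝ) ^ M * ∑ z, h z ^ 2 := by
  induction M with
  | zero => simp
  | succ M ih =>
    rw [sum_fin_arrow_succ]
    simp only [Fin.sum_univ_succ, Fin.cons_zero, Fin.cons_succ, add_sq, Finset.sum_add_distrib,
      Finset.sum_const, Finset.card_univ, nsmul_eq_mul, Fintype.card_fun, Fintype.card_fin]
    have : ∑ z, ∑ ω : Fin M → X, 2 * h z * ∑ j, h (ω j) = 0 := by
      simp only [← Finset.mul_sum, ← Finset.sum_mul, h0]; simp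
    rw [this, ← Finset.mul_sum]
    push_cast
    rw [mul_add, mul_add, ih, pow_succ]; ring

/-- `E |∑ (h(x_j) - h(y_j))| / M ≤ 2 α` for an indicator of density `α`. -/
lemma first_bound {X : Type*} [Fintype X] [Nonempty X] (h : X → ℝ) (hh : ∀ x, h x = 0 ∨ h x = 1) (M : ℕ) (α : ℝ)
    (hα : ∑ z, h z = α * Fintype.card X) :
    ∑ ω : (Fin M → X) × (Fin M → X), |∑ j, (h (ω.1 j) - h (ω.2 j))| ≤
      (Fintype.card ((Fin M → X) × (Fin M → X))) * (2 * M * α) := by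
  have hc : (0:ℝ) < Fintype.card X := by exact_mod_cast Fintype.card_pos
  have h1 := first_moment h M
  have h2 : ∑ ω : Fin M → X, ∑ j, h (ω j) = M * (Fintype.card X : ℝ) ^ M * α := by
    rw [hα] at h1
    have : (Fintype.card X : ℝ) * ∑ ω : Fin M → X, ∑ j, h (ω j) = Fintype.card X * (M * (Fintype.card X : ℝ) ^ M * α) := by
      rw [h1]; ring
    exact mul_left_cancel₀ hc.ne' this
  have hnn : ∀ x, 0 ≤ h x := fun x => by rcases hh x with h | h <;> simp [h]
  calc _ ≤ ∑ ω : (Fin M → X) × (Fin M → X), (∑ j, h (ω.1 j) + ∑ j, h (ω.2 j)) := by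
        refine Finset.sum_le_sum fun ω _ => ?_
        rw [Finset.sum_sub_distrib]
        have e1 : 0 ≤ ∑ j, h (ω.1 j) := Finset.sum_nonneg fun _ _ => hnn _
        have e2 : 0 ≤ ∑ j, h (ω.2 j) := Finset.sum_nonneg fun _ _ => hnn _
        rw [abs_le]; constructor <;> linarith
    _ = _ := by
        rw [Fintype.sum_prod_type]
        simp only [Finset.sum_add_distrib, Finset.sum_const, Finset.card_univ, nsmul_eq_mul, h2,
          Fintype.card_prod, Fintype.card_fun, Fintype.card_fin]
        rw [← Finset.mul_sum, h2]
        push_cast; ring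

lemma abs_moment {X : Type*} [Fintype X] [Nonempty X] (h : X → ℝ) (h0 : ∑ z, h z = 0) (M : ℕ) (α : ℝ) (hα0 : 0 ≤ α)
    (hα : ∑ z, h z ^ 2 ≤ α * Fintype.card X) :
    ∑ ω : Fin M → X, |∑ j, h (ω j)| ≤ (Fintype.card X : ℝ) ^ M * Real.sqrt (M * α) := by
  have hc : (0:ℝ) < Fintype.card X := by exact_mod_cast Fintype.card_pos
  have h1 := second_moment h h0 M
  have h2 : ∑ ω : Fin M → X, (∑ j, h (ω j))^2 ≤ (Fintype.card X : ℝ) ^ M * (M * α) := by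
    have : (Fintype.card X : ℝ) * ∑ ω : Fin M → X, (∑ j, h (ω j))^2 ≤ Fintype.card X * ((Fintype.card X : ℝ) ^ M * (M * α)) := by
      rw [h1]
      refine (mul_le_mul_of_nonneg_left hα (by positivity)).trans (le_of_eq ?_); ring
    exact le_of_mul_le_mul_left this hc
  have h3 := sq_sum_le_card_mul_sum_sq (s := (Finset.univ : Finset (Fin M → X))) (f := fun ω => |∑ j, h (ω j)|)
  simp only [sq_abs, Finset.card_univ, Fintype.card_fun, Fintype.card_fin] at h3
  refine abs_le_of_sq_le_sq' ?_ (by positivity) |>.2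
  rw [mul_pow, Real.sq_sqrt (by positivity)]
  push_cast at h3
  refine h3.trans ((mul_le_mul_of_nonneg_left h2 (by positivity)).trans (le_of_eq ?_)); ring

lemma second_bound {X : Type*} [Fintype X] [Nonempty X] (h : X → ℝ) (hh : ∀ x, h x = 0 ∨ h x = 1) (M : ℕ) (α : ℝ)
    (hα : ∑ z, h z = α * Fintype.card X) :
    ∑ ω : (Fin M → X) × (Fin M → X), |∑ j, (h (ω.1 j) - h (ω.2 j))| ≤
      (Fintype.card ((Fin M → X) × (Fin M → X))) * (2 * Real.sqrt (M * α)) := by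
  have hc : (0:ℝ) < Fintype.card X := by exact_mod_cast Fintype.card_pos
  have hnn : ∀ x, 0 ≤ h x := fun x => by rcases hh x with h | h <;> simp [h]
  have hα0 : 0 ≤ α := by
    have : 0 ≤ α * Fintype.card X := hα ▸ Finset.sum_nonneg fun _ _ => hnn _
    exact nonneg_of_mul_nonneg_left this hc
  have hsq : ∀ x, h x ^ 2 = h x := fun x => by rcases hh x with h | h <;> simp [h]
  have key := abs_moment (fun x => h x - α) (by simp [hα]; ring) M α hα0 (by
    have : ∀ x, (h x - α)^2 = h x - 2 * α * h x + α^2 := fun x => by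
      rw [sub_sq, hsq]; ring
    simp only [this, Finset.sum_add_distrib, Finset.sum_sub_distrib, ← Finset.mul_sum, hα]
    simp
    nlinarith [mul_nonneg (mul_nonneg hα0 hα0) hc.le])
  calc _ ≤ ∑ ω : (Fin M → X) × (Fin M → X), (|∑ j, (h (ω.1 j) - α)| + |∑ j, (h (ω.2 j) - α)|) := by
        refine Finset.sum_le_sum fun ω _ => ?_
        have : ∑ j, (h (ω.1 j) - h (ω.2 j)) = ∑ j, (h (ω.1 j) - α) - ∑ j, (h (ω.2 j) - α) := by
          rw [← Finset.sum_sub_distrib]; exact Finset.sum_congr rfl fun j _ => by ring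
        rw [this]; exact abs_sub _ _
    _ ≤ _ := by
        rw [Fintype.sum_prod_type]
        simp only [Finset.sum_add_distrib, Finset.sum_const, Finset.card_univ, nsmul_eq_mul,
          Fintype.card_prod, Fintype.card_fun, Fintype.card_fin]
        rw [← Finset.mul_sum]
        push_cast
        have := mul_le_mul_of_nonneg_left key (by positivity : 0 ≤ (Fintype.card X : ℝ) ^ M)
        linarith

lemma gdist_le {n d : ℕ} (u v : GridPt n d) : gdist u v ≤ d * 2 ^ n := by
  unfold gdist
  calc _ ≤ ∑ _i : Fin d, (2:ℝ)^n := by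
        refine Finset.sum_le_sum fun i _ => ?_
        have h1 : ((u i : ℕ) : ℝ) ≤ 2^n := by exact_mod_cast (u i).2.le
        have h2 : ((v i : ℕ) : ℝ) ≤ 2^n := by exact_mod_cast (v i).2.le
        have h3 : (0:ℝ) ≤ ((u i : ℕ) : ℝ) := by positivity
        have h4 : (0:ℝ) ≤ ((v i : ℕ) : ℝ) := by positivity
        rw [abs_le]; constructor <;> linarith
    _ = _ := by simp

lemma gdist_comm {n d : ℕ} (u v : GridPt n d) : gdist u v = gdist v u := by
  unfold gdist; exact Finset.sum_congr rfl fun i _ => abs_sub_comm _ _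

lemma gdist_nonneg {n d : ℕ} (u v : GridPt n d) : 0 ≤ gdist u v :=
  Finset.sum_nonneg fun _ _ => abs_nonneg _

lemma gdist_self {n d : ℕ} (u : GridPt n d) : gdist u u = 0 := by simp [gdist]

lemma gdist_triangle {n d : ℕ} (u v w : GridPt n d) : gdist u w ≤ gdist u v + gdist v w := by
  unfold gdist
  rw [← Finset.sum_add_distrib]
  exact Finset.sum_le_sum fun i _ => abs_sub_le _ _ _

lemma gdist_step {n d : ℕ} (x : GridPt n d) (i : Fin d) :
    gdist (Function.update x i (stp (x i))) x ≤ 1 := by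
  unfold gdist
  rw [Finset.sum_eq_single i]
  · simp only [Function.update_self, stp]
    split_ifs <;> simp
  · intro j _ hj; simp [Function.update_of_ne hj]
  · simp

lemma int_le {n d : ℕ} (μ : GridPt n d → ℝ) (hμ : ∑ x, μ x = 0) (f : GridPt n d → ℝ)
    (hf : ∀ u v, |f u - f v| ≤ gdist u v) : |∑ x, f x * μ x| ≤ d * 2 ^ n * ∑ x, |μ x| := by
  let o : GridPt n d := fun _ => ⟨0, by positivity⟩
  have : ∑ x, f x * μ x = ∑ x, (f x - f o) * μ x := by
    simp only [sub_mul, Finset.sum_sub_distrib, ← Finset.mul_sum, hμ]; simp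
  rw [this, Finset.mul_sum]
  refine (Finset.abs_sum_le_sum_abs _ _).trans (Finset.sum_le_sum fun x _ => ?_)
  rw [abs_mul]
  exact mul_le_mul_of_nonneg_right ((hf x o).trans (gdist_le x o)) (abs_nonneg _)

lemma le_tcNorm {n d : ℕ} (μ : GridPt n d → ℝ) (hμ : ∑ x, μ x = 0) (f : GridPt n d → ℝ)
    (hf : ∀ u v, |f u - f v| ≤ gdist u v) : |∑ x, f x * μ x| ≤ tcNorm n d μ := by
  refine le_csSup ⟨d * 2 ^ n * ∑ x, |μ x|, ?_⟩ ⟨f, hf, rfl⟩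
  rintro r ⟨g, hg, rfl⟩
  exact int_le μ hμ g hg

lemma tcNorm_nonneg {n d : ℕ} (μ : GridPt n d → ℝ) : 0 ≤ tcNorm n d μ := by
  refine Real.sSup_nonneg ?_
  rintro r ⟨g, hg, rfl⟩; exact abs_nonneg _

lemma tcNorm_le {n d : ℕ} (μ : GridPt n d → ℝ) (B : ℝ) (hB : 0 ≤ B)
    (h : ∀ f : GridPt n d → ℝ, (∀ u v, |f u - f v| ≤ gdist u v) → |∑ x, f x * μ x| ≤ B) : tcNorm n d μ ≤ B := by
  refine Real.sSup_le ?_ hB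
  rintro r ⟨g, hg, rfl⟩; exact h g hg

lemma tcNorm_smul {n d : ℕ} (t : ℝ) (μ : GridPt n d → ℝ) : tcNorm n d (t • μ) = |t| * tcNorm n d μ := by
  unfold tcNorm
  rw [← smul_eq_mul, ← Real.sSup_smul_of_nonneg (abs_nonneg t)]
  congr 1
  ext r
  simp only [Set.mem_smul_set, Set.mem_ofPred_eq]
  have key : ∀ f : GridPt n d → ℝ, |∑ x, f x * (t • μ) x| = |t| * |∑ x, f x * μ x| := by
    intro f
    rw [← abs_mul, Finset.mul_sum]
    congr 1
    exact Finset.sum_congr rfl fun x _ => by simp; ring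
  constructor
  · rintro ⟨f, hf, rfl⟩
    exact ⟨_, ⟨f, hf, rfl⟩, (key f).symm⟩
  · rintro ⟨_, ⟨f, hf, rfl⟩, rfl⟩
    exact ⟨f, hf, (key f).symm⟩

/-- Random measure `(2^k M)⁻¹ ∑_j (δ_{x_j} - δ_{y_j})`. -/
def meas {X : Type*} [DecidableEq X] (k M : ℕ) (ω : (Fin M → X) × (Fin M → X)) (x : X) : ℝ :=
  (2 ^ k * (M:ℝ))⁻¹ * ∑ j, ((if x = ω.1 j then 1 else 0) - (if x = ω.2 j then 1 else 0))

lemma meas_int {X : Type*} [DecidableEq X] [Fintype X] (k M : ℕ) (ω : (Fin M → X) × (Fin M → X)) (f : X → ℝ) :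
    ∑ x, f x * meas k M ω x = (2 ^ k * (M:ℝ))⁻¹ * ∑ j, (f (ω.1 j) - f (ω.2 j)) := by
  have : ∀ j, f (ω.1 j) - f (ω.2 j) = ∑ x, f x * ((if x = ω.1 j then 1 else 0) - (if x = ω.2 j then 1 else 0)) := by
    intro j; simp [mul_sub]
  simp only [this, meas]
  rw [Finset.sum_comm, Finset.mul_sum]
  refine Finset.sum_congr rfl fun x _ => ?_
  rw [← Finset.mul_sum]; ring

lemma meas_sum {X : Type*} [DecidableEq X] [Fintype X] (k M : ℕ) (ω : (Fin M → X) × (Fin M → X)) :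
    ∑ x, meas k M ω x = 0 := by
  have := meas_int k M ω (fun _ => 1)
  simpa using this

lemma geom_sum_le_inv (q : ℝ) (hq0 : 0 ≤ q) (hq : q < 1) (m : ℕ) : ∑ i ∈ Finset.range m, q ^ i ≤ 1 / (1 - q) := by
  rw [le_div_iff₀ (by linarith), geom_sum_mul_neg]
  have := pow_nonneg hq0 m
  linarith

lemma line_sum (q : ℝ) (hq0 : 0 ≤ q) (hq : q < 1) (m : ℕ) (y : Fin m) :
    ∑ t : Fin m, q ^ (Int.natAbs ((t:ℤ) - (y:ℤ))) ≤ 2 / (1 - q) := by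
  rw [Fin.sum_univ_eq_sum_range (fun t : ℕ => q ^ (Int.natAbs ((t:ℤ) - (y:ℤ)))) m]
  have hy : y.1 ≤ m := y.2.le
  rw [Finset.range_eq_Ico, ← Finset.sum_Ico_consecutive _ (Nat.zero_le y.1) hy]
  have h1 : ∑ t ∈ Finset.Ico 0 y.1, q ^ (Int.natAbs ((t:ℤ) - (y:ℤ))) ≤ 1 / (1-q) := by
    rw [← Finset.range_eq_Ico, ← Finset.sum_range_reflect]
    refine le_trans (Finset.sum_le_sum fun t ht => ?_) (geom_sum_le_inv q hq0 hq y.1)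
    refine pow_le_pow_of_le_one hq0 hq.le ?_
    have := Finset.mem_range.1 ht
    omega
  have h2 : ∑ t ∈ Finset.Ico y.1 m, q ^ (Int.natAbs ((t:ℤ) - (y:ℤ))) ≤ 1 / (1-q) := by
    rw [Finset.sum_Ico_eq_sum_range]
    refine le_trans (le_of_eq (Finset.sum_congr rfl fun t ht => ?_)) (geom_sum_le_inv q hq0 hq (m - y.1))
    congr 1; omega
  have : 2 / (1-q) = 1/(1-q) + 1/(1-q) := by ring
  linarith

lemma ball_count (n d k : ℕ) (y : GridPt n d) :
    ∑ z : GridPt n d, (if gdist z y < d * 2 ^ k then (1:ℝ) else 0) ≤ (8 * 2 ^ k) ^ d := by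
  set q : ℝ := 1 - 1 / (2 * 2^k) with hq
  have h2k : (1:ℝ) ≤ 2^k := one_le_pow₀ (by norm_num)
  have hlt : 1 / (2 * (2:ℝ)^k) ≤ 1/2 := by
    rw [div_le_div_iff₀ (by positivity) (by norm_num)]; linarith
  have hpos : 0 < 1 / (2 * (2:ℝ)^k) := by positivity
  have hq0 : 0 ≤ q := by linarith
  have hq1 : q < 1 := by linarith
  have hb : (1/2:ℝ) ≤ q ^ (2^k) := by
    have := one_add_mul_le_pow (a := -(1 / (2 * (2:ℝ)^k))) (by linarith) (2^k)
    push_cast at this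
    have e : 1 + (2:ℝ)^k * (-(1 / (2 * (2:ℝ)^k))) = 1/2 := by field_simp; norm_num
    rw [e] at this
    rw [hq, sub_eq_add_neg]; exact this
  have hterm : ∀ z : GridPt n d, (if gdist z y < d * 2 ^ k then (1:ℝ) else 0) ≤
      2 ^ d * ∏ i, q ^ (Int.natAbs ((z i : ℤ) - (y i : ℤ))) := by
    intro z
    have hnn : 0 ≤ ∏ i, q ^ (Int.natAbs ((z i : ℤ) - (y i : ℤ))) := Finset.prod_nonneg fun i _ => by positivity
    split_ifs with h
    · rw [Finset.prod_pow_eq_pow_sum]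
      have hg : gdist z y = ((∑ i, Int.natAbs ((z i : ℤ) - (y i : ℤ)) : ℕ) : ℝ) := by
        unfold gdist; push_cast
        exact Finset.sum_congr rfl fun i _ => by simp [Nat.cast_natAbs]
      rw [hg] at h
      have h' : (∑ i, Int.natAbs ((z i : ℤ) - (y i : ℤ))) < 2 ^ k * d := by
        rw [mul_comm]; exact_mod_cast h
      have h3 := pow_le_pow_of_le_one hq0 hq1.le h'.le
      rw [pow_mul] at h3
      have h4 := pow_le_pow_left₀ (by norm_num) hb d
      have h5 : (2:ℝ)^d * (1/2)^d = 1 := by rw [← mul_pow]; norm_num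
      have h6 := mul_le_mul_of_nonneg_left (h4.trans h3) (by positivity : (0:ℝ) ≤ 2^d)
      linarith
    · positivity
  refine (Finset.sum_le_sum fun z _ => hterm z).trans ?_
  rw [← Finset.mul_sum]
  have hprod : ∑ z : GridPt n d, ∏ i, q ^ (Int.natAbs ((z i : ℤ) - (y i : ℤ))) =
      ∏ i : Fin d, ∑ t : Fin (2^n), q ^ (Int.natAbs ((t : ℤ) - (y i : ℤ))) := by
    rw [Finset.prod_univ_sum, Fintype.piFinset_univ]
  rw [hprod]
  have hle : ∏ i : Fin d, ∑ t : Fin (2^n), q ^ (Int.natAbs ((t : ℤ) - (y i : ℤ))) ≤ ∏ _i : Fin d, (4 * (2:ℝ)^k) := by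
    refine Finset.prod_le_prod (fun i _ => Finset.sum_nonneg fun t _ => by positivity) fun i _ => ?_
    refine (line_sum q hq0 hq1 _ (y i)).trans (le_of_eq ?_)
    rw [hq]; field_simp; ring
  rw [Finset.prod_const, Finset.card_univ, Fintype.card_fin] at hle
  refine (mul_le_mul_of_nonneg_left hle (by positivity)).trans (le_of_eq ?_)
  rw [← mul_pow]; congr 1; ring

lemma tc_avg (n d k : ℕ) (hk : k + 4 ≤ n) (hd : 3 ≤ d) :
    (Fintype.card ((Fin (2^((n-k-4)*d)) → GridPt n d) × (Fin (2^((n-k-4)*d)) → GridPt n d)) : ℝ) * (d / 2) ≤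
      ∑ ω : (Fin (2^((n-k-4)*d)) → GridPt n d) × (Fin (2^((n-k-4)*d)) → GridPt n d),
        tcNorm n d (meas k (2^((n-k-4)*d)) ω) := by
  set M : ℕ := 2^((n-k-4)*d) with hM
  have hM0 : 0 < M := by positivity
  have hMr : (0:ℝ) < M := by exact_mod_cast hM0
  have : Nonempty (Fin M) := ⟨⟨0, hM0⟩⟩
  set N : ℝ := (Fintype.card (GridPt n d) : ℝ) with hN
  have hNv : N = (2:ℝ)^(n*d) := by
    rw [hN]; simp [pow_mul]
  have hN0 : 0 < N := by rw [hNv]; positivity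
  let f : (Fin M → GridPt n d) → GridPt n d → ℝ := fun y z =>
    Finset.univ.inf' Finset.univ_nonempty (fun j => gdist z (y j))
  have hf1 : ∀ y u v, f y u - f y v ≤ gdist u v := by
    intro y u v
    obtain ⟨j, _, hj⟩ := Finset.exists_mem_eq_inf' (Finset.univ_nonempty (α := Fin M)) (fun j => gdist v (y j))
    have h1 : f y u ≤ gdist u (y j) := Finset.inf'_le _ (Finset.mem_univ j)
    have h2 : f y v = gdist v (y j) := hj
    have := gdist_triangle u v (y j)
    linarith
  have hf : ∀ y u v, |f y u - f y v| ≤ gdist u v := by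
    intro y u v
    have h1 := hf1 y u v
    have h2 := hf1 y v u
    rw [gdist_comm v u] at h2
    rw [abs_le]; constructor <;> linarith
  have hf0 : ∀ y z, 0 ≤ f y z := fun y z => Finset.le_inf' _ _ fun j _ => gdist_nonneg _ _
  have hfy : ∀ y j, f y (y j) = 0 := fun y j => le_antisymm
    ((Finset.inf'_le _ (Finset.mem_univ j)).trans (gdist_self _).le) (hf0 _ _)
  -- mean of f
  have hmean : ∀ y, N * (d * 2^k / 2) ≤ ∑ z, f y z := by
    intro y
    have h1 : ∀ z, (d:ℝ) * 2^k * (1 - ∑ j, (if gdist z (y j) < d * 2 ^ k then (1:ℝ) else 0)) ≤ f y z := by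
      intro z
      by_cases hz : ∃ j, gdist z (y j) < d * 2^k
      · obtain ⟨j, hj⟩ := hz
        have : (1:ℝ) ≤ ∑ j, (if gdist z (y j) < d * 2 ^ k then (1:ℝ) else 0) := by
          refine le_trans ?_ (Finset.single_le_sum (f := fun j => (if gdist z (y j) < d * 2 ^ k then (1:ℝ) else 0))
            (fun j _ => by positivity) (Finset.mem_univ j))
          simp [hj]
        refine le_trans ?_ (hf0 y z)
        exact mul_nonpos_of_nonneg_of_nonpos (by positivity) (by linarith)
      · push Not at hz
        have : ∑ j, (if gdist z (y j) < d * 2 ^ k then (1:ℝ) else 0) = 0 :=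
          Finset.sum_eq_zero fun j _ => if_neg (not_lt.2 (hz j))
        rw [this, sub_zero, mul_one]
        exact Finset.le_inf' _ _ fun j _ => hz j
    refine le_trans ?_ (Finset.sum_le_sum fun z _ => h1 z)
    rw [← Finset.mul_sum, Finset.sum_sub_distrib, Finset.sum_comm]
    have h2 : ∑ j, ∑ z, (if gdist z (y j) < d * 2 ^ k then (1:ℝ) else 0) ≤ N / 2 := by
      refine (Finset.sum_le_sum fun j _ => ball_count n d k (y j)).trans ?_
      simp only [Finset.sum_const, Finset.card_univ, Fintype.card_fin, nsmul_eq_mul]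
      rw [hM, hNv]
      push_cast
      obtain ⟨r, rfl⟩ : ∃ r, n = k + 4 + r := ⟨n - (k+4), by omega⟩
      have e1 : k + 4 + r - k - 4 = r := by omega
      rw [e1]
      have e2 : (8 * (2:ℝ)^k) = 2^(k+3) := by rw [pow_add]; norm_num; ring
      rw [e2, ← pow_mul, ← pow_add]
      rw [le_div_iff₀ (by norm_num), ← pow_succ]
      refine pow_le_pow_right₀ (by norm_num) ?_
      nlinarith
    simp only [Finset.sum_const, Finset.card_univ, nsmul_eq_mul, mul_one]
    have := mul_le_mul_of_nonneg_left h2 (by positivity : (0:ℝ) ≤ d * 2^k)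
    rw [← hN]
    linarith
  have hlow : ∀ ω : (Fin M → GridPt n d) × (Fin M → GridPt n d),
      (2 ^ k * (M:ℝ))⁻¹ * ∑ j, f ω.2 (ω.1 j) ≤ tcNorm n d (meas k M ω) := by
    intro ω
    refine le_trans ?_ (le_tcNorm _ (meas_sum k M ω) (f ω.2) (hf ω.2))
    refine le_trans (le_of_eq ?_) (le_abs_self _)
    rw [meas_int]
    simp [hfy]
  refine le_trans ?_ (Finset.sum_le_sum fun ω _ => hlow ω)
  rw [Fintype.sum_prod_type_right]
  have hx : ∀ y : Fin M → GridPt n d, N^M * (d / 2) ≤ ∑ x : Fin M → GridPt n d, (2 ^ k * (M:ℝ))⁻¹ * ∑ j, f y (x j) := by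
    intro y
    rw [← Finset.mul_sum]
    have h1 := first_moment (f y) M
    rw [← hN] at h1
    have h2 : ∑ ω : Fin M → GridPt n d, ∑ j, f y (ω j) = M * N^M * (∑ z, f y z) / N := by
      rw [← h1]; field_simp
    rw [h2]
    have h3 := mul_le_mul_of_nonneg_left (hmean y) (by positivity : 0 ≤ (2 ^ k * (M:ℝ))⁻¹ * (M * N^M / N))
    have h4 : (2 ^ k * (M:ℝ))⁻¹ * (M * N^M / N) * (N * (d * 2^k / 2)) = N^M * (d / 2) := by
      field_simp
    rw [h4] at h3
    refine h3.trans (le_of_eq ?_); ring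
  refine le_trans ?_ (Finset.sum_le_sum fun y _ => hx y)
  rw [Finset.sum_const, Finset.card_univ, nsmul_eq_mul, Fintype.card_prod, Fintype.card_fun, Fintype.card_fin]
  push_cast
  rw [← hN]
  exact le_of_eq (by ring)

/-- Averaging step: a `C¹` map which is coarsely expanding along `μ` has large derivative on average. -/
lemma avg_deriv {V E : Type*} [NormedAddCommGroup V] [NormedSpace ℝ V] [FiniteDimensional ℝ V]
    [MeasurableSpace V] [BorelSpace V] (vol : Measure V) [vol.IsAddHaarMeasure]
    [NormedAddCommGroup E] [NormedSpace ℝ E] [CompleteSpace E]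
    (G : V → E) (hG : ContDiff ℝ 1 G) (v : V) (c L R q : ℝ) (hc : ‖v‖ ≤ c) (hL : 0 < L)
    (hq : ∀ x, q ≤ ‖G (x + L • v) - G x‖) :
    q * vol.real (Metric.closedBall 0 R) ≤
      L * ∫ x in Metric.closedBall 0 (R + c * L), ‖fderiv ℝ G x v‖ ∂vol := by
  have hcont : Continuous (fun x => fderiv ℝ G x v) :=
    (hG.continuous_fderiv (by norm_num)).clm_apply continuous_const
  have hjoint : Continuous (fun z : V × ℝ => ‖fderiv ℝ G (z.1 + z.2 • v) v‖) := by
    have : Continuous (fun z : V × ℝ => z.1 + z.2 • v) := by fun_prop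
    exact (hcont.comp this).norm
  have h1 : ∀ x, q ≤ ∫ s in Set.Icc 0 L, ‖fderiv ℝ G (x + s • v) v‖ := by
    intro x
    refine (hq x).trans ?_
    have hd : ∀ s ∈ Set.uIcc 0 L, HasDerivAt (fun s : ℝ => G (x + s • v)) (fderiv ℝ G (x + s • v) v) s := by
      intro s _
      have h2 : HasFDerivAt G (fderiv ℝ G (x + s • v)) (x + s • v) :=
        (hG.differentiable (by norm_num) _).hasFDerivAt
      have h3 : HasDerivAt (fun s : ℝ => x + s • v) v s := by
        simpa using ((hasDerivAt_id s).smul_const v).const_add x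
      exact h2.comp_hasDerivAt s h3
    have hc1 : Continuous (fun s : ℝ => fderiv ℝ G (x + s • v) v) :=
      hcont.comp (by fun_prop)
    have h4 := intervalIntegral.integral_eq_sub_of_hasDerivAt hd (hc1.intervalIntegrable _ _)
    simp only [zero_smul, add_zero] at h4
    rw [← h4, integral_Icc_eq_integral_Ioc, ← intervalIntegral.integral_of_le hL.le]
    exact intervalIntegral.norm_integral_le_integral_norm hL.le
  have hint : Integrable (fun z : V × ℝ => ‖fderiv ℝ G (z.1 + z.2 • v) v‖)
      ((vol.restrict (Metric.closedBall 0 R)).prod (volume.restrict (Set.Icc 0 L))) := by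
    rw [Measure.prod_restrict]
    exact hjoint.continuousOn.integrableOn_compact ((isCompact_closedBall 0 R).prod isCompact_Icc)
  have h5 : q * vol.real (Metric.closedBall 0 R) ≤
      ∫ x in Metric.closedBall 0 R, (∫ s in Set.Icc 0 L, ‖fderiv ℝ G (x + s • v) v‖) ∂vol := by
    have : q * vol.real (Metric.closedBall 0 R) = ∫ x in Metric.closedBall (0:V) R, q ∂vol := by
      simp [mul_comm]
    rw [this]
    refine integral_mono ?_ hint.integral_prod_left (fun x => h1 x)
    exact integrableOn_const (by exact (isCompact_closedBall 0 R).measure_lt_top.ne) (by simp)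
  refine h5.trans ?_
  rw [integral_integral_swap hint]
  have h6 : ∀ s ∈ Set.Icc 0 L, ∫ x in Metric.closedBall 0 R, ‖fderiv ℝ G (x + s • v) v‖ ∂vol ≤
      ∫ x in Metric.closedBall 0 (R + c * L), ‖fderiv ℝ G x v‖ ∂vol := by
    intro s hs
    have hmp := measurePreserving_add_right vol (s • v)
    have hpre : (Metric.closedBall (0:V) R) = (fun x => x + s • v) ⁻¹' (Metric.closedBall (s • v) R) := by
      ext x; simp [dist_eq_norm]
    rw [hpre, hmp.setIntegral_preimage_emb (measurableEmbedding_addRight (s • v))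
      (fun x => ‖fderiv ℝ G x v‖)]
    refine setIntegral_mono_set (hcont.norm.continuousOn.integrableOn_compact (isCompact_closedBall _ _))
      (Filter.Eventually.of_forall fun x => norm_nonneg _) (Filter.Eventually.of_forall ?_)
    refine Metric.closedBall_subset_closedBall' ?_
    rw [dist_zero_right, norm_smul, Real.norm_of_nonneg hs.1]
    have := mul_le_mul hs.2 hc (norm_nonneg _) hL.le
    linarith
  calc _ ≤ ∫ s in Set.Icc 0 L, (∫ x in Metric.closedBall 0 (R + c * L), ‖fderiv ℝ G x v‖ ∂vol) := by
        refine setIntegral_mono_on hint.integral_prod_right ?_ measurableSet_Icc h6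
        exact integrableOn_const (by simp) (by simp)
    _ = _ := by simp [hL.le]

/-- Linearization: inequalities valid for all linear maps into `E` pass to bi-Lipschitz maps. -/
lemma linearize {X E : Type*} [Fintype X] [NormedAddCommGroup E] [NormedSpace ℝ E] [CompleteSpace E]
    (p : (X → ℝ) → ℝ) (hp : ∀ (t : ℝ) v, p (t • v) = |t| * p v) (hp0 : ∀ v, 0 ≤ p v)
    (K : ℝ) (hK0 : 0 ≤ K) (hK : ∀ v, p v ≤ K * ‖v‖) (D : ℝ) (hD : 0 ≤ D) (F : (X → ℝ) → E)
    (hlow : ∀ x y, p (x - y) ≤ ‖F x - F y‖) (hup : ∀ x y, ‖F x - F y‖ ≤ D * p (x - y))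
    {ι κ : Type*} [Fintype ι] [Fintype κ] (a : ι → ℝ) (ha : ∀ i, 0 ≤ a i) (μ : ι → X → ℝ)
    (b : κ → ℝ) (hb : ∀ j, 0 ≤ b j) (e : κ → X → ℝ)
    (hlin : ∀ T : (X → ℝ) →L[ℝ] E, ∑ i, a i * ‖T (μ i)‖ ≤ ∑ j, b j * ‖T (e j)‖) :
    ∑ i, a i * p (μ i) ≤ D * ∑ j, b j * p (e j) := by
  have hlip : ∀ x y, ‖F x - F y‖ ≤ D * K * ‖x - y‖ := fun x y =>
    (hup x y).trans (by rw [mul_assoc]; exact mul_le_mul_of_nonneg_left (hK _) hD)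
  have hFc : Continuous F := by
    have : LipschitzWith (D * K).toNNReal F := LipschitzWith.of_dist_le_mul fun x y => by
      rw [dist_eq_norm, dist_eq_norm, Real.coe_toNNReal _ (by positivity)]; exact hlip x y
    exact this.continuous
  let φ : ContDiffBump (0 : X → ℝ) := ⟨1, 2, by norm_num, by norm_num⟩
  have hφ : Continuous (φ.normed volume) := φ.continuous_normed
  let G : (X → ℝ) → E := convolution (φ.normed volume) F (ContinuousLinearMap.lsmul ℝ ℝ) volume
  have hG : ContDiff ℝ 1 G :=
    φ.hasCompactSupport_normed.contDiff_convolution_left _ φ.contDiff_normed hFc.locallyIntegrable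
  have hGF : ∀ x, ‖G x - F x‖ ≤ D * K * 2 := by
    intro x
    rw [← dist_eq_norm]
    refine φ.dist_normed_convolution_le hFc.aestronglyMeasurable ?_
    intro y hy
    rw [dist_eq_norm]
    refine (hlip y x).trans (mul_le_mul_of_nonneg_left ?_ (by positivity))
    rw [← dist_eq_norm]; exact (Metric.mem_ball.1 hy).le
  have hGL : ∀ x v, ‖G (x + v) - G x‖ ≤ D * p v := by
    intro x v
    have hi : ∀ z, Integrable (fun t => φ.normed volume t • F (z - t)) := fun z => by
      refine Continuous.integrable_of_hasCompactSupport (by fun_prop) ?_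
      exact φ.hasCompactSupport_normed.smul_right
    have : G (x + v) - G x = ∫ t, φ.normed volume t • (F (x + v - t) - F (x - t)) := by
      simp only [G, MeasureTheory.convolution, ContinuousLinearMap.lsmul_apply]
      rw [← integral_sub (hi _) (hi _)]
      simp only [smul_sub]
    rw [this]
    refine (norm_integral_le_integral_norm _).trans ?_
    calc _ ≤ ∫ t, φ.normed volume t * (D * p v) := by
          refine integral_mono_of_nonneg (Filter.Eventually.of_forall fun t => norm_nonneg _)
            (φ.integrable_normed.mul_const _) (Filter.Eventually.of_forall fun t => ?_)
          simp only [norm_smul, Real.norm_of_nonneg (φ.nonneg_normed t)]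
          refine mul_le_mul_of_nonneg_left ?_ (φ.nonneg_normed t)
          have := hup (x + v - t) (x - t)
          rwa [show x + v - t - (x - t) = v by abel] at this
      _ = D * p v := by rw [integral_mul_const, φ.integral_normed, one_mul]
  have hT : ∀ x v, ‖fderiv ℝ G x v‖ ≤ D * p v := by
    intro x v
    have h2 : HasFDerivAt G (fderiv ℝ G x) (x + (0:ℝ) • v) := by
      simpa using (hG.differentiable (by norm_num) x).hasFDerivAt
    have h3 : HasDerivAt (fun s : ℝ => x + s • v) v 0 := by
      simpa using ((hasDerivAt_id (0:ℝ)).smul_const v).const_add x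
    have h4 := h2.comp_hasDerivAt 0 h3
    refine h4.le_of_lip' (by have := hp0 v; positivity) (Filter.Eventually.of_forall fun t => ?_)
    have := hGL x (t • v)
    rw [hp] at this
    simpa [mul_assoc, mul_comm, mul_left_comm] using this
  set B := D * ∑ j, b j * p (e j) with hB
  have hB0 : 0 ≤ B := mul_nonneg hD (Finset.sum_nonneg fun j _ => mul_nonneg (hb j) (hp0 _))
  have hTB : ∀ x, ∑ i, a i * ‖fderiv ℝ G x (μ i)‖ ≤ B := by
    intro x
    refine (hlin _).trans ?_
    rw [hB, Finset.mul_sum]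
    refine Finset.sum_le_sum fun j _ => ?_
    have := mul_le_mul_of_nonneg_left (hT x (e j)) (hb j)
    linarith
  obtain ⟨c, hc0, hc⟩ : ∃ c : ℝ, 0 ≤ c ∧ ∀ i, ‖μ i‖ ≤ c :=
    ⟨∑ i, ‖μ i‖, Finset.sum_nonneg fun _ _ => norm_nonneg _, fun i =>
      Finset.single_le_sum (f := fun i => ‖μ i‖) (fun _ _ => norm_nonneg _) (Finset.mem_univ i)⟩
  set N := Module.finrank ℝ (X → ℝ) with hN
  set w : ℝ := (volume : Measure (X → ℝ)).real (Metric.closedBall 0 1) with hw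
  have hw0 : 0 < w := ENNReal.toReal_pos (Metric.measure_closedBall_pos _ _ one_pos).ne'
    (isCompact_closedBall _ _).measure_lt_top.ne
  have main : ∀ L : ℝ, 1 ≤ L → ∑ i, a i * p (μ i) ≤ B * (1 + c / L) ^ N + (D * K * 4 * ∑ i, a i) / L := by
    intro L hL
    have hL0 : 0 < L := by linarith
    have hR : (0:ℝ) ≤ L ^ 2 := by positivity
    have h1 : ∀ i, (L * p (μ i) - D * K * 4) * ((L^2)^N * w) ≤
        L * ∫ x in Metric.closedBall 0 (L^2 + c * L), ‖fderiv ℝ G x (μ i)‖ := by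
      intro i
      rw [hw, hN, ← Measure.addHaar_real_closedBall' _ 0 hR]
      refine avg_deriv volume G hG (μ i) c L (L^2) _ (hc i) hL0 ?_
      intro x
      have h2 := hlow (x + L • μ i) x
      rw [add_sub_cancel_left, hp, abs_of_pos hL0] at h2
      have h3 := hGF x
      have h4 := hGF (x + L • μ i)
      rw [norm_sub_rev] at h4
      have h5 : F (x + L • μ i) - F x = (F (x + L • μ i) - G (x + L • μ i)) + (G (x + L • μ i) - G x) + (G x - F x) := by abel
      have h6 := norm_add₃_le (a := F (x + L • μ i) - G (x + L • μ i)) (b := G (x + L • μ i) - G x) (c := G x - F x)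
      rw [← h5] at h6
      linarith
    have hci : ∀ i, IntegrableOn (fun x => a i * ‖fderiv ℝ G x (μ i)‖) (Metric.closedBall 0 (L^2 + c * L)) volume := fun i =>
      (((hG.continuous_fderiv (by norm_num)).clm_apply continuous_const).norm.const_mul _ |>.continuousOn.integrableOn_compact (isCompact_closedBall _ _))
    have h2 : ∑ i, a i * ∫ x in Metric.closedBall 0 (L^2 + c * L), ‖fderiv ℝ G x (μ i)‖ ≤ B * ((L^2 + c * L)^N * w) := by
      simp only [← integral_const_mul]
      rw [← integral_finsetSum _ (fun i _ => hci i)]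
      calc _ ≤ ∫ x in Metric.closedBall (0 : X → ℝ) (L^2 + c * L), B := by
            refine integral_mono (integrable_finsetSum _ fun i _ => hci i) ?_ hTB
            exact integrableOn_const (by exact (isCompact_closedBall _ _).measure_lt_top.ne) (by simp)
        _ = _ := by
            rw [hw, hN, ← Measure.addHaar_real_closedBall' _ 0 (by positivity)]
            simp [mul_comm]
    have h3 : ∑ i, a i * ((L * p (μ i) - D * K * 4) * ((L^2)^N * w)) ≤ L * (B * ((L^2 + c * L)^N * w)) := by
      refine le_trans (Finset.sum_le_sum fun i _ => mul_le_mul_of_nonneg_left (h1 i) (ha i)) ?_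
      refine le_trans (le_of_eq ?_) (mul_le_mul_of_nonneg_left h2 hL0.le)
      rw [Finset.mul_sum]
      exact Finset.sum_congr rfl fun i _ => by ring
    have h4 : ∑ i, a i * ((L * p (μ i) - D * K * 4) * ((L^2)^N * w)) =
        (L * ∑ i, a i * p (μ i) - D * K * 4 * ∑ i, a i) * ((L^2)^N * w) := by
      rw [Finset.mul_sum, Finset.mul_sum, ← Finset.sum_sub_distrib, Finset.sum_mul]
      exact Finset.sum_congr rfl fun i _ => by ring
    rw [h4] at h3
    have h5 : L * (B * ((L^2 + c * L)^N * w)) = (L * B * (1 + c / L)^N) * ((L^2)^N * w) := by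
      have : L^2 + c * L = (1 + c / L) * L^2 := by field_simp
      rw [this, mul_pow]; ring
    rw [h5] at h3
    have h6 := le_of_mul_le_mul_right h3 (by positivity)
    have h7 : B * (1 + c / L) ^ N + (D * K * 4 * ∑ i, a i) / L = (L * B * (1 + c / L)^N + D * K * 4 * ∑ i, a i) / L := by
      field_simp
    rw [h7, le_div_iff₀ hL0]
    linarith
  have hlim : Filter.Tendsto (fun L : ℝ => B * (1 + c / L) ^ N + (D * K * 4 * ∑ i, a i) / L) Filter.atTop
      (nhds (B * (1 + 0) ^ N + 0)) := by
    have t1 : Filter.Tendsto (fun L : ℝ => c / L) Filter.atTop (nhds 0) := Filter.Tendsto.const_div_atTop Filter.tendsto_id c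
    have t2 : Filter.Tendsto (fun L : ℝ => (D * K * 4 * ∑ i, a i) / L) Filter.atTop (nhds 0) := Filter.Tendsto.const_div_atTop Filter.tendsto_id _
    exact (((t1.const_add 1).pow N).const_mul B).add t2
  have := ge_of_tendsto hlim (Filter.eventually_atTop.2 ⟨1, main⟩)
  simpa using this

lemma psi_le (w : ℝ) (hw : 0 < w) :
    min w (1 / w) ≤ 25 / 2 * (Real.sqrt 2 * w / (1 + Real.sqrt 2 * w) - w / (1 + w)) := by
  have hs0 : 7 / 5 ≤ Real.sqrt 2 := Real.le_sqrt_of_sq_le (by norm_num)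
  have hs1 : Real.sqrt 2 ≤ 3 / 2 := Real.sqrt_le_iff.2 ⟨by norm_num, by norm_num⟩
  set s := Real.sqrt 2
  have h1 : s * w / (1 + s * w) - w / (1 + w) = (s - 1) * w / ((1 + s * w) * (1 + w)) := by
    have : 0 < 1 + s * w := by positivity
    field_simp; ring
  have hp : 0 < (1 + s * w) * (1 + w) := by positivity
  rw [h1, ← mul_div_assoc, le_div_iff₀ hp]
  have h2 : 5 * w ≤ 25 / 2 * ((s - 1) * w) := by nlinarith
  refine le_trans ?_ h2
  rcases le_total w 1 with h | h
  · refine (mul_le_mul_of_nonneg_right (min_le_left _ _) hp.le).trans ?_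
    have : (1 + s * w) * (1 + w) ≤ (5/2) * 2 :=
      mul_le_mul (by nlinarith) (by linarith) (by positivity) (by norm_num)
    nlinarith
  · refine (mul_le_mul_of_nonneg_right (min_le_right _ _) hp.le).trans ?_
    have : (1 + s * w) * (1 + w) ≤ (5/2 * w) * (2 * w) :=
      mul_le_mul (by nlinarith) (by linarith) (by positivity) (by positivity)
    rw [one_div, inv_mul_le_iff₀ hw]
    linarith

lemma psi_sum (w : ℕ → ℝ) (hw : ∀ i, 0 < w i) (hw1 : ∀ i, w (i+1) = Real.sqrt 2 * w i) (r : ℕ) :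
    ∑ i ∈ Finset.range r, min (w i) (1 / w i) ≤ 25 / 2 := by
  have h : ∑ i ∈ Finset.range r, min (w i) (1 / w i) ≤
      ∑ i ∈ Finset.range r, (25/2 * (w (i+1) / (1 + w (i+1))) - 25/2 * (w i / (1 + w i))) := by
    refine Finset.sum_le_sum fun i _ => ?_
    rw [hw1, ← mul_sub]; exact psi_le _ (hw i)
  rw [Finset.sum_range_sub (fun i => 25/2 * (w i / (1 + w i)))] at h
  have h0 : 0 ≤ w 0 / (1 + w 0) := by have := hw 0; positivity
  have h1 : w r / (1 + w r) ≤ 1 := by have := hw r; rw [div_le_one (by positivity)]; linarith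
  linarith

lemma term_le (d j : ℕ) (hd : 3 ≤ d) (hj : 4 ≤ j) (β : ℝ) (hβ : 0 < β) (c : ℝ) (hc : 0 ≤ c)
    (w : ℝ) (hw : w = Real.sqrt (2 ^ j * β / 16)) (hc1 : w < 1 → 1 ≤ c) (hc2 : 1 ≤ w → 1 ≤ c * w ^ (d - 3)) :
    2 ^ j * min (β ^ d) (Real.sqrt (2 ^ ((j - 4) * d) * β ^ d) / 2 ^ ((j-4)*d)) ≤
      16 * β ^ (d-1) * (c * min w (1/w)) := by
  have hw0 : 0 < w := by rw [hw]; positivity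
  have hw2 : w ^ 2 = 2 ^ j * β / 16 := by rw [hw, Real.sq_sqrt (by positivity)]
  obtain ⟨i, rfl⟩ : ∃ i, j = i + 4 := ⟨j - 4, by omega⟩
  obtain ⟨e, rfl⟩ : ∃ e, d = e + 3 := ⟨d - 3, by omega⟩
  simp only [Nat.add_sub_cancel] at *
  have hb : (2:ℝ) ^ i * β = w ^ 2 := by rw [hw2, pow_add]; ring
  have hMb : (2:ℝ) ^ (i * (e+3)) * β ^ (e+3) = (w ^ (e+3)) ^ 2 := by
    rw [pow_mul, ← mul_pow, hb, ← pow_mul, ← pow_mul, mul_comm]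
  rw [hMb, Real.sqrt_sq (by positivity)]
  rcases lt_or_ge w 1 with h | h
  · have hmin : min w (1/w) = w := min_eq_left (by rw [le_div_iff₀ hw0]; nlinarith)
    rw [hmin]
    refine (mul_le_mul_of_nonneg_left (min_le_left _ _) (by positivity)).trans ?_
    have : (2:ℝ) ^ (i+4) * β ^ (e+3) = 16 * β ^ (e + 2) * w ^ 2 := by
      rw [← hb]; ring
    rw [this]
    show 16 * β ^ (e + 2) * w ^ 2 ≤ 16 * β ^ (e+2) * (c * w)
    refine mul_le_mul_of_nonneg_left ?_ (by positivity)
    have := hc1 h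
    nlinarith
  · have hmin : min w (1/w) = 1/w := min_eq_right (by rw [div_le_iff₀ hw0]; nlinarith)
    rw [hmin]
    refine (mul_le_mul_of_nonneg_left (min_le_right _ _) (by positivity)).trans ?_
    show _ ≤ 16 * β ^ (e+2) * (c * (1/w))
    have hM : (0:ℝ) < 2 ^ (i * (e+3)) := by positivity
    have e1 : (2:ℝ) ^ (i+4) * (w ^ (e+3) / 2 ^ (i * (e+3))) = 16 * β ^ (e+2) * (1 / w ^ (e+1)) := by
      have h1 : (2:ℝ) ^ i * w ^ (e+3) * w ^ (e+1) = β ^ (e+2) * 2 ^ (i * (e+3)) := by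
        have h3 : (2:ℝ) ^ (i * (e+3)) = 2 ^ i * (2 ^ i) ^ (e + 2) := by
          rw [pow_mul]; ring
        have h4 : β ^ (e+2) * (2 ^ i) ^ (e+2) = (w^2)^(e+2) := by rw [← mul_pow, ← hb]; ring
        rw [h3]
        calc _ = 2 ^ i * (w^2)^(e+2) := by ring
          _ = _ := by rw [← h4]; ring
      rw [pow_add]
      field_simp
      linarith
    rw [e1]
    refine mul_le_mul_of_nonneg_left ?_ (by positivity)
    have h5 := hc2 h
    rw [mul_one_div, div_le_div_iff₀ (by positivity) hw0, pow_succ]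
    nlinarith

lemma num_sum (d r : ℕ) (hd : 3 ≤ d) (β : ℝ) (hβ : 0 < β) (hβd : β ^ d ≤ 1 / 2) :
    ∑ i ∈ Finset.range r, 2 ^ (23 + i) * min (β ^ d) (Real.sqrt (2 ^ ((23 + i - 4) * d) * β ^ d) / 2 ^ ((23 + i-4)*d)) ≤
      1200 * (β ^ (d-1) * (1 - β)) := by
  set w : ℕ → ℝ := fun i => Real.sqrt (2 ^ (23 + i) * β / 16) with hw
  have hw0 : ∀ i, 0 < w i := fun i => by simp only [hw]; positivity
  have hw1 : ∀ i, w (i+1) = Real.sqrt 2 * w i := fun i => by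
    simp only [hw]; rw [← Real.sqrt_mul (by norm_num)]; congr 1; ring
  have hs := psi_sum w hw0 hw1 r
  have hdr : (3:ℝ) ≤ d := by exact_mod_cast hd
  have key : ∀ c : ℝ, 0 ≤ c → (∀ i, w i < 1 → 1 ≤ c) → (∀ i, 1 ≤ w i → 1 ≤ c * w i ^ (d - 3)) →
      ∑ i ∈ Finset.range r, 2 ^ (23 + i) * min (β ^ d) (Real.sqrt (2 ^ ((23 + i - 4) * d) * β ^ d) / 2 ^ ((23 + i-4)*d)) ≤
      200 * c * β ^ (d-1) := by
    intro c hc h1 h2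
    refine (Finset.sum_le_sum fun i _ => term_le d (23 + i) hd (by omega) β hβ c hc (w i) rfl (h1 i) (h2 i)).trans ?_
    rw [← Finset.mul_sum, ← Finset.mul_sum]
    have := mul_le_mul_of_nonneg_left hs (by positivity : 0 ≤ 16 * β ^ (d-1) * c)
    linarith
  have hpos : 0 < β ^ (d-1) := by positivity
  rcases le_total β (1/2) with h | h
  · have := key 1 zero_le_one (fun _ _ => le_refl _) (fun i hi => by rw [one_mul]; exact one_le_pow₀ hi)
    nlinarith
  · have hbig : ∀ i, 2 ≤ w i := by
      intro i
      refine Real.le_sqrt_of_sq_le ?_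
      have : (2:ℝ)^23 ≤ 2 ^ (23 + i) := pow_le_pow_right₀ (by norm_num) (by omega)
      norm_num at this ⊢
      nlinarith
    have h1 := key (3 / d) (by positivity) (fun i hi => absurd hi (by have := hbig i; linarith)) (by
      intro i _
      have h2 : (2:ℝ) ^ (d-3) ≤ w i ^ (d-3) := pow_le_pow_left₀ (by norm_num) (hbig i) _
      have h3 : (d:ℝ) ≤ 3 * 2 ^ (d-3) := by
        obtain ⟨e, rfl⟩ : ∃ e, d = e + 3 := ⟨d - 3, by omega⟩
        simp only [Nat.add_sub_cancel]
        have := one_add_mul_le_pow (a := (1:ℝ)) (by norm_num) e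
        norm_num at this
        push_cast
        have : (0:ℝ) ≤ e := by positivity
        linarith
      rw [div_mul_eq_mul_div, le_div_iff₀ (by positivity)]
      linarith)
    have h2 := one_add_mul_le_pow (a := β - 1) (by linarith) d
    rw [add_sub_cancel] at h2
    have h3 : 1 / (2 * (d:ℝ)) ≤ 1 - β := by
      rw [div_le_iff₀ (by positivity)]; linarith
    refine h1.trans ?_
    have h4 := mul_le_mul_of_nonneg_left h3 (by positivity : 0 ≤ 1200 * β ^ (d-1))
    have h5 : 200 * (3 / (d:ℝ)) * β ^ (d-1) = 1200 * β ^ (d-1) * (1 / (2 * (d:ℝ))) := by field_simp; norm_num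
    rw [h5]; linarith

/-- Inequalities for real functions integrate to inequalities for linear maps into `L₁`. -/
lemma linear_ineq {S X ι κ : Type*} [MeasurableSpace S] (ν : Measure S) [Fintype X] [DecidableEq X] [Fintype ι] [Fintype κ]
    (a : ι → ℝ) (μ : ι → X → ℝ) (b : κ → ℝ) (u v : κ → X)
    (h : ∀ f : X → ℝ, ∑ i, a i * |∑ x, f x * μ i x| ≤ ∑ j, b j * |f (u j) - f (v j)|)
    (T : (X → ℝ) →L[ℝ] Lp ℝ 1 ν) :
    ∑ i, a i * ‖T (μ i)‖ ≤ ∑ j, b j * ‖T (Pi.single (u j) 1 - Pi.single (v j) 1)‖ := by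
  set f : X → Lp ℝ 1 ν := fun x => T (Pi.single x 1) with hf
  have hfi : ∀ x, Integrable (fun s => f x s) ν := fun x => L1.integrable_coeFn (f x)
  have hT : ∀ g : X → ℝ, T g = ∑ x, g x • f x := by
    intro g
    conv_lhs => rw [← Finset.univ_sum_single g]
    rw [map_sum]
    refine Finset.sum_congr rfl fun x _ => ?_
    rw [hf, ← map_smul, ← Pi.single_smul]; simp
  have h1 : ∀ i, ‖T (μ i)‖ = ∫ s, |∑ x, f x s * μ i x| ∂ν := by
    intro i
    rw [L1.norm_eq_integral_norm, hT]
    refine integral_congr_ae ?_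
    have e1 := Lp.coeFn_finsetSum (s := Finset.univ) (fun x => μ i x • f x)
    have e2 : ∀ᵐ s ∂ν, ∀ x, (μ i x • f x : Lp ℝ 1 ν) s = μ i x * f x s := by
      rw [ae_all_iff]; intro x
      filter_upwards [Lp.coeFn_smul (μ i x) (f x)] with s hs
      rw [hs]; rfl
    filter_upwards [e1, e2] with s hs1 hs2
    rw [hs1, Real.norm_eq_abs]
    congr 1
    rw [Finset.sum_apply]
    exact Finset.sum_congr rfl fun x _ => by rw [hs2, mul_comm]
  have h2 : ∀ j, ‖T (Pi.single (u j) 1 - Pi.single (v j) 1)‖ = ∫ s, |f (u j) s - f (v j) s| ∂ν := by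
    intro j
    rw [map_sub, L1.norm_eq_integral_norm]
    refine integral_congr_ae ?_
    filter_upwards [Lp.coeFn_sub (f (u j)) (f (v j))] with s hs
    show ‖(f (u j) - f (v j) : Lp ℝ 1 ν) s‖ = _
    rw [hs, Real.norm_eq_abs]; rfl
  have i1 : ∀ i, Integrable (fun s => a i * |∑ x, f x s * μ i x|) ν := fun i =>
    (integrable_finsetSum _ (fun x _ => (hfi x).mul_const _)).abs.const_mul _
  have i2 : ∀ j, Integrable (fun s => b j * |f (u j) s - f (v j) s|) ν := fun j =>
    ((hfi _).sub (hfi _)).abs.const_mul _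
  simp only [h1, h2, ← integral_const_mul]
  rw [← integral_finsetSum _ (fun i _ => i1 i), ← integral_finsetSum _ (fun j _ => i2 j)]
  exact integral_mono (integrable_finsetSum _ fun i _ => i1 i) (integrable_finsetSum _ fun j _ => i2 j)
    (fun s => h (fun x => f x s))

/-- Average over the random measures at scale `k` of the absolute integral of `g`. -/
def avgInt (n d k : ℕ) (g : GridPt n d → ℝ) : ℝ :=
  ∑ ω : (Fin (2^((n-k-4)*d)) → GridPt n d) × (Fin (2^((n-k-4)*d)) → GridPt n d),
    (Fintype.card ((Fin (2^((n-k-4)*d)) → GridPt n d) × (Fin (2^((n-k-4)*d)) → GridPt n d)) : ℝ)⁻¹ *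
      |∑ x, g x * meas k (2^((n-k-4)*d)) ω x|

lemma grid_nonempty (n d : ℕ) : Nonempty (GridPt n d) := ⟨fun _ => ⟨0, by positivity⟩⟩

lemma avgInt_le (n d k : ℕ) (hk : k ≤ n) (g : GridPt n d → ℝ) (hg : ∀ x, g x = 0 ∨ g x = 1) (α : ℝ)
    (hα : ∑ z, g z = α * Fintype.card (GridPt n d)) :
    avgInt n d k g ≤ 2 / 2 ^ n * (2 ^ (n - k) *
      min α (Real.sqrt (2 ^ ((n - k - 4) * d) * α) / 2 ^ ((n - k - 4) * d))) := by
  have := grid_nonempty n d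
  have h1 := first_bound g hg (2^((n-k-4)*d)) α hα
  have h2 := second_bound g hg (2^((n-k-4)*d)) α hα
  unfold avgInt
  rw [← Finset.mul_sum]
  simp only [meas_int, abs_mul]
  rw [← Finset.mul_sum]
  set c : ℝ := (Fintype.card ((Fin (2^((n-k-4)*d)) → GridPt n d) × (Fin (2^((n-k-4)*d)) → GridPt n d)) : ℝ) with hc
  have hc0 : 0 < c := by
    rw [hc]
    exact_mod_cast Fintype.card_pos
  set S : ℝ := ∑ ω : (Fin (2^((n-k-4)*d)) → GridPt n d) × (Fin (2^((n-k-4)*d)) → GridPt n d),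
    |∑ j, (g (ω.1 j) - g (ω.2 j))|
  have hS : c⁻¹ * S ≤ min (2 * (2:ℝ)^((n-k-4)*d) * α) (2 * Real.sqrt (2 ^ ((n - k - 4) * d) * α)) := by
    rw [inv_mul_le_iff₀ hc0]
    push_cast at h1 h2
    rcases min_choice (2 * (2:ℝ)^((n-k-4)*d) * α) (2 * Real.sqrt (2 ^ ((n - k - 4) * d) * α)) with h | h <;> rw [h] <;> assumption
  push_cast
  set M : ℝ := (2:ℝ)^((n-k-4)*d) with hM
  have hM0 : 0 < M := by positivity
  have h2n : (2:ℝ)^n = 2^k * 2^(n-k) := by rw [← pow_add]; congr 1; omega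
  rw [abs_of_pos (by positivity : (0:ℝ) < (2 ^ k * M)⁻¹)]
  calc c⁻¹ * ((2 ^ k * M)⁻¹ * S) = (2 ^ k * M)⁻¹ * (c⁻¹ * S) := by ring
    _ ≤ (2 ^ k * M)⁻¹ * min (2 * M * α) (2 * Real.sqrt (M * α)) :=
        mul_le_mul_of_nonneg_left hS (by positivity)
    _ = _ := by
        have : min (2 * M * α) (2 * Real.sqrt (M * α)) = 2 * M * min α (Real.sqrt (M * α) / M) := by
          rw [mul_min_of_nonneg _ _ (by positivity : (0:ℝ) ≤ 2 * M)]
          congr 1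
          field_simp
        rw [this, h2n]
        field_simp

lemma card_grid (n d : ℕ) : (Fintype.card (GridPt n d) : ℝ) = 2 ^ (n * d) := by
  simp [pow_mul]

lemma set_half (n d : ℕ) (hn : 23 ≤ n) (hd : 3 ≤ d) (g : GridPt n d → ℝ) (hg : ∀ x, g x = 0 ∨ g x = 1)
    (h0 : 0 < ∑ x, g x) (h1 : ∑ x, g x ≤ 2 ^ (n * d) / 2) :
    ∑ k ∈ Finset.range (n - 22), avgInt n d k g ≤ 2400 / (d * 2 ^ (n * d)) * edgeSum (2^n) d g := by
  set N : ℝ := (2:ℝ)^(n*d) with hN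
  have hN0 : 0 < N := by positivity
  set β : ℝ := ((∑ x, g x) / N) ^ ((d:ℝ)⁻¹) with hβ
  have hβd : β ^ d = (∑ x, g x) / N := Real.rpow_inv_natCast_pow (by positivity) (by omega)
  have hβ0 : 0 < β := by positivity
  have hβh : β ^ d ≤ 1 / 2 := by
    rw [hβd, div_le_iff₀ hN0]; linarith
  have hsum : ∑ x, g x = β ^ d * Fintype.card (GridPt n d) := by
    rw [card_grid, hβd, ← hN]; field_simp
  have hns := num_sum d (n - 22) hd β hβ0 hβh
  rw [← Finset.sum_range_reflect] at hns
  have hiso := iso (m := 2^n) (by positivity) d g hg β hβ0 (by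
    rw [hsum, card_grid]; push_cast; rw [mul_pow, pow_mul]; ring) (by omega)
  push_cast at hiso
  rw [← pow_mul, ← hN] at hiso
  calc ∑ k ∈ Finset.range (n - 22), avgInt n d k g
      ≤ ∑ k ∈ Finset.range (n - 22), 2 / 2 ^ n * (2 ^ (23 + (n - 22 - 1 - k)) *
      min (β ^ d) (Real.sqrt (2 ^ ((23 + (n - 22 - 1 - k) - 4) * d) * β ^ d) / 2 ^ ((23 + (n - 22 - 1 - k) - 4) * d))) := by
        refine Finset.sum_le_sum fun k hk => ?_
        rw [Finset.mem_range] at hk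
        have e : 23 + (n - 22 - 1 - k) = n - k := by omega
        rw [e]
        exact avgInt_le n d k (by omega) g hg _ hsum
    _ ≤ 2 / 2 ^ n * (1200 * (β ^ (d-1) * (1 - β))) := by
        rw [← Finset.mul_sum]
        exact mul_le_mul_of_nonneg_left hns (by positivity)
    _ = 2400 / (d * N) * (d * N / 2 ^ n * (β ^ (d-1) * (1 - β))) := by
        have : (0:ℝ) < d := by exact_mod_cast (by omega : 0 < d)
        field_simp; ring
    _ ≤ _ := mul_le_mul_of_nonneg_left hiso (by positivity)

lemma set_all (n d : ℕ) (hn : 23 ≤ n) (hd : 3 ≤ d) (g : GridPt n d → ℝ) (hg : ∀ x, g x = 0 ∨ g x = 1) :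
    ∑ k ∈ Finset.range (n - 22), avgInt n d k g ≤ 2400 / (d * 2 ^ (n * d)) * edgeSum (2^n) d g := by
  have hg0 : ∀ x, 0 ≤ g x := fun x => by rcases hg x with h | h <;> simp [h]
  have hg1 : ∀ x, g x ≤ 1 := fun x => by rcases hg x with h | h <;> simp [h]
  have hE : ∀ f, 0 ≤ edgeSum (2^n) d f := fun f => by unfold edgeSum; positivity
  have zero : ∀ c : ℝ, (∀ x, g x = c) →
      ∑ k ∈ Finset.range (n - 22), avgInt n d k g ≤ 2400 / (d * 2 ^ (n * d)) * edgeSum (2^n) d g := by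
    intro c h
    have : ∑ k ∈ Finset.range (n - 22), avgInt n d k g = 0 := by
      refine Finset.sum_eq_zero fun k _ => ?_
      unfold avgInt
      refine Finset.sum_eq_zero fun ω _ => ?_
      simp only [h, ← Finset.mul_sum, meas_sum]
      simp
    rw [this]
    have := hE g
    positivity
  rcases le_or_gt (∑ x, g x) (2 ^ (n * d) / 2) with h | h
  · rcases (Finset.sum_nonneg fun x _ => hg0 x : 0 ≤ ∑ x, g x).eq_or_lt with h0 | h0
    · refine zero 0 fun x => ?_
      exact (Finset.sum_eq_zero_iff_of_nonneg fun x _ => hg0 x).1 h0.symm x (Finset.mem_univ x)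
    · exact set_half n d hn hd g hg h0 h
  · have hs : ∑ x, (1 - g x) = 2 ^ (n * d) - ∑ x, g x := by
      rw [Finset.sum_sub_distrib, ← card_grid]; simp
    rcases (Finset.sum_nonneg fun x _ => sub_nonneg.2 (hg1 x) : 0 ≤ ∑ x, (1 - g x)).eq_or_lt with h0 | h0
    · refine zero 1 fun x => ?_
      have := (Finset.sum_eq_zero_iff_of_nonneg fun x _ => sub_nonneg.2 (hg1 x)).1 h0.symm x (Finset.mem_univ x)
      linarith
    · have := set_half n d hn hd (fun x => 1 - g x) (fun x => by
        rcases hg x with h | h <;> simp [h]) h0 (by rw [hs]; linarith)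
      have e1 : edgeSum (2^n) d (fun x => 1 - g x) = edgeSum (2^n) d g := by
        unfold edgeSum
        refine Finset.sum_congr rfl fun x _ => Finset.sum_congr rfl fun i _ => ?_
        rw [abs_sub_comm]; congr 1; ring
      have e2 : ∀ k, avgInt n d k (fun x => 1 - g x) = avgInt n d k g := by
        intro k
        unfold avgInt
        refine Finset.sum_congr rfl fun ω _ => ?_
        congr 1
        simp only [sub_mul, Finset.sum_sub_distrib, one_mul, meas_sum]
        rw [zero_sub, abs_neg]
      simpa only [e1, e2] using this

/-- The projection onto measures of total mass zero. -/
def proj {n d : ℕ} (g : GridPt n d → ℝ) : GridPt n d → ℝ :=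
  g - (∑ x, g x) • Pi.single (fun _ => ⟨0, by positivity⟩) 1

lemma proj_sum {n d : ℕ} (g : GridPt n d → ℝ) : ∑ x, proj g x = 0 := by
  simp [proj, Finset.sum_sub_distrib, ← Finset.mul_sum]

lemma proj_sub {n d : ℕ} (g h : GridPt n d → ℝ) : proj (g - h) = proj g - proj h := by
  simp only [proj, Pi.sub_apply, Finset.sum_sub_distrib, sub_smul]
  abel

lemma proj_smul {n d : ℕ} (t : ℝ) (g : GridPt n d → ℝ) : proj (t • g) = t • proj g := by
  simp only [proj, Pi.smul_apply, smul_sub, ← Finset.smul_sum, smul_assoc]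

lemma proj_self {n d : ℕ} (g : GridPt n d → ℝ) (h : ∑ x, g x = 0) : proj g = g := by
  simp [proj, h]

lemma single_sub_int {n d : ℕ} (x y : GridPt n d) (f : GridPt n d → ℝ) :
    ∑ z, f z * ((Pi.single x 1 - Pi.single y 1 : GridPt n d → ℝ) z) = f x - f y := by
  simp [mul_sub, Finset.sum_sub_distrib, Pi.single_apply]

lemma single_sub_sum {n d : ℕ} (x y : GridPt n d) :
    ∑ z, ((Pi.single x 1 - Pi.single y 1 : GridPt n d → ℝ) z) = 0 := by
  simp

lemma proj_bound {n d : ℕ} (g : GridPt n d → ℝ) :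
    tcNorm n d (proj g) ≤ (d * 2 ^ n * (2 * 2 ^ (n * d))) * ‖g‖ := by
  refine tcNorm_le _ _ (by positivity) fun f hf => (int_le _ (proj_sum g) f hf).trans ?_
  rw [mul_assoc ((d:ℝ) * 2 ^ n)]
  refine mul_le_mul_of_nonneg_left ?_ (by positivity : (0:ℝ) ≤ (d:ℝ) * 2 ^ n)
  have hb : ∑ x, |g x| ≤ 2 ^ (n * d) * ‖g‖ := by
    calc ∑ x, |g x| ≤ ∑ x : GridPt n d, ‖g‖ := Finset.sum_le_sum fun x _ => norm_le_pi_norm g x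
      _ = _ := by rw [← card_grid]; simp
  have h2 : ∀ x, |proj g x| ≤ |g x| + |∑ x, g x| * (Pi.single (fun _ => ⟨0, by positivity⟩) 1 : GridPt n d → ℝ) x := by
    intro x
    simp only [proj, Pi.sub_apply, Pi.smul_apply, smul_eq_mul]
    refine (abs_sub _ _).trans ?_
    rw [abs_mul]
    gcongr
    rw [Pi.single_apply]; split_ifs <;> simp
  calc ∑ x, |proj g x| ≤ ∑ x, (|g x| + |∑ x, g x| * (Pi.single (fun _ => ⟨0, by positivity⟩) 1 : GridPt n d → ℝ) x) :=
        Finset.sum_le_sum fun x _ => h2 x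
    _ = ∑ x, |g x| + |∑ x, g x| := by
        rw [Finset.sum_add_distrib, ← Finset.mul_sum]; simp
    _ ≤ _ := by
        have := Finset.abs_sum_le_sum_abs g Finset.univ
        linarith

lemma D_nonneg {n d : ℕ} (hn : 1 ≤ n) (hd : 3 ≤ d) (D : ℝ)
    (F : {μ : GridPt n d → ℝ // ∑ x, μ x = 0} → L1Space)
    (hF : ∀ μ ν : {μ : GridPt n d → ℝ // ∑ x, μ x = 0},
            tcNorm n d (μ.1 - ν.1) ≤ ‖F μ - F ν‖ ∧
            ‖F μ - F ν‖ ≤ D * tcNorm n d (μ.1 - ν.1)) : 0 ≤ D := by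
  let x : GridPt n d := fun _ => ⟨0, by positivity⟩
  let y : GridPt n d := fun _ => ⟨1, Nat.one_lt_two_pow (by omega)⟩
  obtain ⟨h1, h2⟩ := hF ⟨Pi.single x 1 - Pi.single y 1, single_sub_sum x y⟩ ⟨0, by simp⟩
  simp only [sub_zero] at h1 h2
  have h3 := le_tcNorm _ (single_sub_sum x y) (fun z => gdist z y) (fun u v => by
    rw [abs_le]
    have a1 := gdist_triangle u v y
    have a2 := gdist_triangle v u y
    have a3 := gdist_comm u v
    constructor <;> linarith)
  rw [single_sub_int, gdist_self] at h3
  have h4 : gdist x y = d := by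
    simp [gdist, x, y]
  rw [h4, sub_zero] at h3
  have h5 : (3:ℝ) ≤ d := by exact_mod_cast hd
  have h6 := le_abs_self (d:ℝ)
  by_contra hD
  push Not at hD
  nlinarith

theorem tc_grid_distortion_lower :
    ∃ C : ℝ, 0 < C ∧ ∀ (n d : ℕ), 1 ≤ n → 3 ≤ d → ∀ (D : ℝ)
      (F : {μ : GridPt n d → ℝ // ∑ x, μ x = 0} → L1Space),
        (∀ μ ν : {μ : GridPt n d → ℝ // ∑ x, μ x = 0},
            tcNorm n d (μ.1 - ν.1) ≤ ‖F μ - F ν‖ ∧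
            ‖F μ - F ν‖ ≤ D * tcNorm n d (μ.1 - ν.1)) →
        C⁻¹ * ((n:ℝ) - 23) * d ≤ D := by
  refine ⟨4800, by norm_num, fun n d hn hd D F hF => ?_⟩
  have hD := D_nonneg hn hd D F hF
  have hdr : (3:ℝ) ≤ d := by exact_mod_cast hd
  rcases lt_or_ge n 23 with hn23 | hn23
  · have : (n:ℝ) ≤ 23 := by exact_mod_cast hn23.le
    refine le_trans ?_ hD
    have : ((n:ℝ) - 23) * d ≤ 0 := mul_nonpos_of_nonpos_of_nonneg (by linarith) (by linarith)
    rw [mul_assoc]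
    nlinarith
  have := grid_nonempty n d
  let ι := (k : Fin (n - 22)) × ((Fin (2^((n-k.1-4)*d)) → GridPt n d) × (Fin (2^((n-k.1-4)*d)) → GridPt n d))
  let a : ι → ℝ := fun i =>
    (Fintype.card ((Fin (2^((n-i.1.1-4)*d)) → GridPt n d) × (Fin (2^((n-i.1.1-4)*d)) → GridPt n d)) : ℝ)⁻¹
  let μ : ι → GridPt n d → ℝ := fun i => meas i.1.1 (2^((n-i.1.1-4)*d)) i.2
  let b : GridPt n d × Fin d → ℝ := fun _ => 2400 / (d * 2 ^ (n * d))
  let u : GridPt n d × Fin d → GridPt n d := fun j => Function.update j.1 j.2 (stp (j.1 j.2))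
  let v : GridPt n d × Fin d → GridPt n d := fun j => j.1
  have ha : ∀ i, 0 ≤ a i := fun i => by positivity
  have hμ : ∀ i, ∑ x, μ i x = 0 := fun i => meas_sum _ _ _
  have hset : ∀ g : GridPt n d → ℝ, (∀ x, g x = 0 ∨ g x = 1) →
      ∑ i, a i * |∑ x, g x * μ i x| ≤ ∑ j, b j * |g (u j) - g (v j)| := by
    intro g hg
    have h := set_all n d hn23 hd g hg
    rw [← Fin.sum_univ_eq_sum_range (fun k => avgInt n d k g)] at h
    rw [Fintype.sum_sigma, Fintype.sum_prod_type]
    simp only [b, ← Finset.mul_sum]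
    exact h
  have hlin := linearize (fun g => tcNorm n d (proj g))
    (fun t g => by rw [proj_smul, tcNorm_smul]) (fun g => tcNorm_nonneg _) _ (by positivity)
    (fun g => proj_bound g) D hD (fun g => F ⟨proj g, proj_sum g⟩)
    (fun x y => by
      rw [proj_sub]
      exact (hF ⟨proj x, proj_sum x⟩ ⟨proj y, proj_sum y⟩).1)
    (fun x y => by
      rw [proj_sub]
      exact (hF ⟨proj x, proj_sum x⟩ ⟨proj y, proj_sum y⟩).2)
    a ha μ b (fun j => by positivity) (fun j => Pi.single (u j) 1 - Pi.single (v j) 1)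
    (linear_ineq _ a μ b u v (coarea a ha μ hμ b u v hset))
  have hl : ((n:ℝ) - 22) * (d / 2) ≤ ∑ i, a i * tcNorm n d (proj (μ i)) := by
    rw [Fintype.sum_sigma]
    have : ((n:ℝ) - 22) * (d / 2) = ∑ k : Fin (n - 22), ((d:ℝ) / 2) := by
      rw [Finset.sum_const, Finset.card_univ, Fintype.card_fin, nsmul_eq_mul, Nat.cast_sub (by omega)]
      norm_num
    rw [this]
    refine Finset.sum_le_sum fun k _ => ?_
    have hk := tc_avg n d k.1 (by have := k.2; omega) hd
    simp only [proj_self _ (hμ _)]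
    simp only [a, μ]
    rw [← le_inv_mul_iff₀ (by exact_mod_cast Fintype.card_pos), Finset.mul_sum] at hk
    exact hk
  have hr : ∑ j, b j * tcNorm n d (proj (Pi.single (u j) 1 - Pi.single (v j) 1)) ≤ 2400 := by
    calc ∑ j, b j * tcNorm n d (proj (Pi.single (u j) 1 - Pi.single (v j) 1))
        ≤ ∑ j : GridPt n d × Fin d, (2400:ℝ) / (d * 2 ^ (n * d)) := by
          refine Finset.sum_le_sum fun j _ => ?_
          have : tcNorm n d (proj (Pi.single (u j) 1 - Pi.single (v j) 1)) ≤ 1 := by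
            rw [proj_self _ (single_sub_sum _ _)]
            refine tcNorm_le _ _ zero_le_one fun f hf => ?_
            rw [single_sub_int]
            exact (hf _ _).trans (gdist_step _ _)
          exact mul_le_of_le_one_right (by positivity) this
      _ = 2400 := by
          rw [Finset.sum_const, Finset.card_univ, Fintype.card_prod, nsmul_eq_mul, Nat.cast_mul, card_grid,
            Fintype.card_fin]
          field_simp
  have hfin : ((n:ℝ) - 22) * (d / 2) ≤ D * 2400 :=
    hl.trans (hlin.trans (mul_le_mul_of_nonneg_left hr hD))
  rw [mul_assoc, inv_mul_le_iff₀ (by norm_num)]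
  nlinarith
end
end

section
/- Let n, d, k be integers with d ≥ 3 and 1 ≤ k ≤ n, and set p' := p/(2−p). Then E[∫ f_{S_−(X)} dμ_k] = p'·p^{−1}·2^k·E[∫ f_{S_−(X)} dVol], where Vol is the normalized counting measure on [2^n]^d (so Vol([2^n]^d) = 1). -/
open MeasureTheory Finset

noncomputable section

/-- Indices of the dyadic cubes in `D_k`. -/
abbrev CubeIdx (d k : ℕ) := Fin d → Fin (2^k)

/-- The dyadic cube of side-cardinality `2^(n-k)` indexed by `j ∈ {0,…,2^k-1}^d`. -/
def cube (n d k : ℕ) (j : CubeIdx d k) : Finset (GridPt n d) :=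
  Finset.univ.filter (fun x => ∀ i, (x i : ℕ) / 2^(n-k) = (j i : ℕ))

/-- `p = 2^{-4d}`. -/
def pp (d : ℕ) : ℝ := ((2:ℝ)^(4*d))⁻¹

/-- The law of each `X_Q`: takes values `±1` with probability `p/2` each
and `0` with probability `1-p`. -/
def stepMeasure (d : ℕ) : Measure ℝ :=
  (Real.toNNReal (pp d / 2)) • Measure.dirac (1:ℝ)
  + (Real.toNNReal (pp d / 2)) • Measure.dirac (-1:ℝ)
  + (Real.toNNReal (1 - pp d)) • Measure.dirac (0:ℝ)

instance (d : ℕ) : IsFiniteMeasure (stepMeasure d) := by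
  unfold stepMeasure; infer_instance

/-- The joint law of the i.i.d. family `{X_Q}_{Q ∈ D_k}`; a sample point
`ω : CubeIdx d k → ℝ` records the values `X_Q = ω Q`. -/
def prodMeasure (d k : ℕ) : Measure (CubeIdx d k → ℝ) :=
  Measure.pi fun _ => stepMeasure d

/-- `μ_k(A) = ∑_{Q ∈ D_k} p⁻¹ 2^k X_Q Vol(A ∩ Q)`, as a function of the sample point `ω`. -/
def muMeas (n d k : ℕ) (A : Finset (GridPt n d)) (ω : CubeIdx d k → ℝ) : ℝ :=
  ∑ j : CubeIdx d k, (pp d)⁻¹ * 2^k * ω j * Vol n d (A ∩ cube n d k j)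

/-- The function `f_S(z) = min{dist(z, ∪_{Q∈S} Q), d·2^n}`, with `f_∅ ≡ d·2^n`. -/
def fS (n d k : ℕ) (S : Finset (CubeIdx d k)) (z : GridPt n d) : ℝ :=
  if h : (S.biUnion (cube n d k)).Nonempty
  then min ((S.biUnion (cube n d k)).inf' h (fun w => gdist z w)) ((d:ℝ) * 2^n)
  else (d:ℝ) * 2^n

/-- The random subset `S₋(X) = {Q ∈ D_k : X_Q = -1}`. -/
def Sminus (d k : ℕ) (ω : CubeIdx d k → ℝ) : Finset (CubeIdx d k) :=
  Finset.univ.filter (fun j => ω j = -1)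

/-- `∫ f dVol`, where `Vol` is the normalized counting measure on the grid. -/
def intVol (n d : ℕ) (f : GridPt n d → ℝ) : ℝ := (∑ x, f x) / 2^(n*d)

/-- `∫ f dμ_k`, as a function of the sample point `ω`. -/
def intMu (n d k : ℕ) (f : GridPt n d → ℝ) (ω : CubeIdx d k → ℝ) : ℝ :=
  ∑ x, f x * muMeas n d k {x} ω

lemma integrable_step (d : ℕ) (g : ℝ → ℝ) : Integrable g (stepMeasure d) := by
  unfold stepMeasure
  have h : ∀ (a : ℝ) (c : NNReal), Integrable g (c • Measure.dirac a) := fun a c =>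
    (integrable_dirac (by simp)).smul_measure_nnreal
  exact ((h _ _).add_measure (h _ _)).add_measure (h _ _)

lemma pp_bounds (d : ℕ) : 0 < pp d ∧ pp d ≤ 1 := by
  unfold pp
  refine ⟨by positivity, inv_le_one_of_one_le₀ (one_le_pow₀ (by norm_num))⟩

lemma integral_step (d : ℕ) (g : ℝ → ℝ) : ∫ t, g t ∂(stepMeasure d) =
    pp d / 2 * g 1 + pp d / 2 * g (-1) + (1 - pp d) * g 0 := by
  have h : ∀ (a : ℝ) (c : NNReal), Integrable g (c • Measure.dirac a) := fun a c =>
    (integrable_dirac (by simp)).smul_measure_nnreal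
  obtain ⟨h0, h1⟩ := pp_bounds d
  unfold stepMeasure
  rw [integral_add_measure ((h _ _).add_measure (h _ _)) (h _ _),
    integral_add_measure (h _ _) (h _ _)]
  simp only [integral_smul_nnreal_measure, integral_dirac, NNReal.smul_def, smul_eq_mul]
  rw [Real.coe_toNNReal _ (by linarith), Real.coe_toNNReal _ (by linarith)]

open Classical in
/-- The one-coordinate factor. -/
def fac {d k : ℕ} (T : Finset (CubeIdx d k)) (j0 : CubeIdx d k) (g : ℝ → ℝ)
    (j : CubeIdx d k) (t : ℝ) : ℝ :=
  (if (t = -1 ↔ j ∈ T) then 1 else 0) * (if j = j0 then g t else 1)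

lemma expand {d k : ℕ} (c : Finset (CubeIdx d k) → ℝ) (j0 : CubeIdx d k) (g : ℝ → ℝ)
    (ω : CubeIdx d k → ℝ) :
    c (Sminus d k ω) * g (ω j0) = ∑ T, c T * ∏ j, fac T j0 g j (ω j) := by
  classical
  rw [Finset.sum_eq_single (Sminus d k ω)]
  · congr 1
    unfold fac
    rw [Finset.prod_mul_distrib, Finset.prod_ite_eq' ]
    simp [Sminus]
  · intro T _ hT
    have : ∃ j, ¬ (ω j = -1 ↔ j ∈ T) := by
      by_contra! hcon
      apply hT
      ext j
      simp [Sminus, hcon j]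
    obtain ⟨j, hj⟩ := this
    rw [Finset.prod_eq_zero (Finset.mem_univ j), mul_zero]
    unfold fac
    rw [if_neg hj, zero_mul]
  · simp

lemma integrable_term {d k : ℕ} (T : Finset (CubeIdx d k)) (j0 : CubeIdx d k) (g : ℝ → ℝ) :
    Integrable (fun ω : CubeIdx d k → ℝ => ∏ j, fac T j0 g j (ω j)) (prodMeasure d k) :=
  Integrable.fintype_prod (fun j => integrable_step d (fac T j0 g j))

lemma integrable_main {d k : ℕ} (c : Finset (CubeIdx d k) → ℝ) (j0 : CubeIdx d k) (g : ℝ → ℝ) :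
    Integrable (fun ω : CubeIdx d k → ℝ => c (Sminus d k ω) * g (ω j0)) (prodMeasure d k) := by
  simp_rw [expand]
  exact integrable_finset_sum _ fun T _ => (integrable_term T j0 g).const_mul _

lemma integral_main {d k : ℕ} (c : Finset (CubeIdx d k) → ℝ) (j0 : CubeIdx d k) (g : ℝ → ℝ) :
    ∫ ω : CubeIdx d k → ℝ, c (Sminus d k ω) * g (ω j0) ∂(prodMeasure d k)
      = ∑ T, c T * ∏ j, ∫ t, fac T j0 g j t ∂(stepMeasure d) := by
  simp_rw [expand]
  rw [integral_finset_sum _ fun T _ => (integrable_term T j0 g).const_mul _]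
  refine Finset.sum_congr rfl fun T _ => ?_
  rw [integral_const_mul]
  congr 1
  exact integral_fintype_prod_eq_prod (fun j => fac T j0 g j)

lemma key {d k : ℕ} (c : Finset (CubeIdx d k) → ℝ) (j0 : CubeIdx d k)
    (hc : ∀ T, j0 ∈ T → c T = 0) :
    ∫ ω : CubeIdx d k → ℝ, c (Sminus d k ω) * ω j0 ∂(prodMeasure d k)
      = pp d / (2 - pp d) * ∫ ω : CubeIdx d k → ℝ, c (Sminus d k ω) ∂(prodMeasure d k) := by
  classical
  have h1 := integral_main c j0 id
  have h2 := integral_main c j0 (fun _ => 1)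
  simp only [id, mul_one] at h1 h2
  rw [h1, h2, Finset.mul_sum]
  refine Finset.sum_congr rfl fun T _ => ?_
  by_cases hT : j0 ∈ T
  · simp [hc T hT]
  obtain ⟨hp0, hp1⟩ := pp_bounds d
  have hne : (2 - pp d) ≠ 0 := by linarith
  rw [← Finset.mul_prod_erase univ _ (Finset.mem_univ j0),
    ← Finset.mul_prod_erase univ (fun j => ∫ t, fac T j0 (fun _ => 1) j t ∂(stepMeasure d))
      (Finset.mem_univ j0)]
  have h3 : ∏ j ∈ univ.erase j0, ∫ t, fac T j0 (fun x => x) j t ∂(stepMeasure d)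
      = ∏ j ∈ univ.erase j0, ∫ t, fac T j0 (fun _ => 1) j t ∂(stepMeasure d) := by
    refine Finset.prod_congr rfl fun j hj => ?_
    simp [fac, Finset.ne_of_mem_erase hj]
  have h4 : ∫ t, fac T j0 (fun x => x) j0 t ∂(stepMeasure d) = pp d / 2 := by
    rw [integral_step]
    norm_num [fac, hT]
  have h5 : ∫ t, fac T j0 (fun _ => 1) j0 t ∂(stepMeasure d) = (2 - pp d) / 2 := by
    rw [integral_step]
    norm_num [fac, hT]
    ring
  change c T * ((∫ t, fac T j0 (fun x => x) j0 t ∂(stepMeasure d)) *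
    ∏ j ∈ univ.erase j0, ∫ t, fac T j0 (fun x => x) j t ∂(stepMeasure d)) = _
  rw [h3, h4, h5]
  field_simp

lemma fS_zero {n d k : ℕ} (S : Finset (CubeIdx d k)) (z : GridPt n d) (j : CubeIdx d k)
    (hj : j ∈ S) (hz : z ∈ cube n d k j) : fS n d k S z = 0 := by
  have hmem : z ∈ S.biUnion (cube n d k) := Finset.mem_biUnion.2 ⟨j, hj, hz⟩
  have hne : (S.biUnion (cube n d k)).Nonempty := ⟨z, hmem⟩
  unfold fS
  rw [dif_pos hne]
  have h0 : (S.biUnion (cube n d k)).inf' hne (fun w => gdist z w) = 0 := by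
    apply le_antisymm
    · refine (Finset.inf'_le _ hmem).trans ?_
      simp [gdist]
    · refine Finset.le_inf' _ _ fun w _ => ?_
      unfold gdist
      positivity
  rw [h0]
  exact min_eq_left (by positivity)

lemma exists_cube {n d k : ℕ} (hkn : k ≤ n) (x : GridPt n d) :
    ∃ j0 : CubeIdx d k, ∀ j, x ∈ cube n d k j ↔ j = j0 := by
  refine ⟨fun i => ⟨(x i : ℕ) / 2^(n-k), ?_⟩, fun j => ?_⟩
  · rw [Nat.div_lt_iff_lt_mul (by positivity), ← pow_add, Nat.add_sub_cancel' hkn]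
    exact (x i).2
  · simp only [cube, Finset.mem_filter, Finset.mem_univ, true_and, funext_iff, Fin.ext_iff]
    exact forall_congr' fun i => eq_comm

lemma muMeas_single {n d k : ℕ} (x : GridPt n d) (j0 : CubeIdx d k)
    (h : ∀ j, x ∈ cube n d k j ↔ j = j0) (ω : CubeIdx d k → ℝ) :
    muMeas n d k {x} ω = (pp d)⁻¹ * 2^k / 2^(n*d) * ω j0 := by
  unfold muMeas
  rw [Finset.sum_eq_single j0]
  · rw [Finset.singleton_inter_of_mem ((h j0).2 rfl)]
    simp [Vol]
    ring
  · intro j _ hj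
    rw [Finset.singleton_inter_of_notMem (fun hx => hj ((h j).1 hx))]
    simp [Vol]
  · simp

/-- `E[∫ f_{S₋(X)} dμ_k] = p'·p⁻¹·2^k·E[∫ f_{S₋(X)} dVol]`, where `p' = p/(2-p)`. -/
theorem expected_intMu_eq (n d k : ℕ) (hd : 3 ≤ d) (hk : 1 ≤ k) (hkn : k ≤ n) :
    ∫ ω, intMu n d k (fS n d k (Sminus d k ω)) ω ∂(prodMeasure d k)
      = (pp d / (2 - pp d)) * (pp d)⁻¹ * 2^k *
          ∫ ω, intVol n d (fS n d k (Sminus d k ω)) ∂(prodMeasure d k) := by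
  choose J hJ using fun x : GridPt n d => exists_cube (k := k) hkn x
  have hI1 : ∀ x : GridPt n d, Integrable
      (fun ω : CubeIdx d k → ℝ => fS n d k (Sminus d k ω) x * ω (J x)) (prodMeasure d k) :=
    fun x => integrable_main (fun T => fS n d k T x) (J x) id
  have hI2 : ∀ x : GridPt n d, Integrable
      (fun ω : CubeIdx d k → ℝ => fS n d k (Sminus d k ω) x) (prodMeasure d k) := fun x => by
    simpa using integrable_main (fun T => fS n d k T x) (J x) (fun _ => 1)
  have e1 : ∀ ω : CubeIdx d k → ℝ, intMu n d k (fS n d k (Sminus d k ω)) ω =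
      (pp d)⁻¹ * 2^k / 2^(n*d) * ∑ x, fS n d k (Sminus d k ω) x * ω (J x) := fun ω => by
    unfold intMu
    rw [Finset.mul_sum]
    refine Finset.sum_congr rfl fun x _ => ?_
    rw [muMeas_single x (J x) (hJ x)]
    ring
  simp_rw [e1, intVol]
  rw [integral_const_mul, integral_div, integral_finset_sum _ fun x _ => hI1 x,
    integral_finset_sum _ fun x _ => hI2 x]
  have e2 : ∀ x : GridPt n d,
      ∫ ω : CubeIdx d k → ℝ, fS n d k (Sminus d k ω) x * ω (J x) ∂(prodMeasure d k)
      = pp d / (2 - pp d) * ∫ ω, fS n d k (Sminus d k ω) x ∂(prodMeasure d k) := fun x =>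
    key (fun T => fS n d k T x) (J x) fun T hT => fS_zero T x (J x) hT ((hJ x _).2 rfl)
  simp_rw [e2]
  rw [← Finset.mul_sum]
  ring
end
end
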